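/- arXiv:1809.09892 — 8 statements merged into one kernel-verified Lean document; each statement's English description precedes it below -/
import Mathlib

section
/- Let K be an algebraically closed field with a nontrivial non-archimedean valuation v: K* → ℝ, valuation ring R, and residue field k of characteristic different from 2 and 3. Let a, b ∈ R and suppose W: y² = x³ + a·(x − b)² is a minimal integral Weierstrass model of an elliptic curve E over K (in particular its discriminant Δ is nonzero). Let a' ∈ K be a square root of a and P = (0, a'·b) ∈ E(K). Suppose E has multiplicative reduction, i.e. v(Δ) > 0 and v(c₄) = 0 for this minimal model, and suppose P reduces to the singular point of the reduced curve Ē over k, i.e. both partial derivatives of the reduced Weierstrass polynomial vanish at the reduction of P. Then v(a) = 0 and v(b) > 0. -/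
open WeierstrassCurve

/-- A Weierstrass model is *integral* with respect to the additive valuation `v` if all of its
coefficients have nonnegative valuation, i.e. lie in the valuation ring `R`. -/
def IsIntegralModel {K : Type*} [Field K] (v : AddValuation K (WithTop ℝ))
    (W : WeierstrassCurve K) : Prop :=
  0 ≤ v W.a₁ ∧ 0 ≤ v W.a₂ ∧ 0 ≤ v W.a₃ ∧ 0 ≤ v W.a₄ ∧ 0 ≤ v W.a₆

/-- `W` is a Weierstrass model of (the elliptic curve defined by) `E` if it is obtained from `E`
by an admissible change of variables `x = u²x + r`, `y = u³y + u²sx + t`. -/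
def IsModelOf {K : Type*} [Field K] (E W : WeierstrassCurve K) : Prop :=
  ∃ C : VariableChange K, W = C • E

/-- `W` is a *minimal integral Weierstrass model* of `E`: it is an integral model of `E` whose
discriminant has minimal valuation among all integral models of `E`. -/
def IsMinimalModel {K : Type*} [Field K] (v : AddValuation K (WithTop ℝ))
    (E W : WeierstrassCurve K) : Prop :=
  IsModelOf E W ∧ IsIntegralModel v W ∧
    ∀ W' : WeierstrassCurve K, IsModelOf E W' → IsIntegralModel v W' → v W.Δ ≤ v W'.Δ

/-!
Modulo the maximal ideal, singularity at `P` gives `2ab ≡ 0`, hence `b₄ = -4ab ≡ 0` and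
`c₄ = b₂² - 24b₄ ≡ b₂² = (4a)²`. As `c₄` is a unit, so are `2` and `a`, and `2ab ≡ 0` forces
`b ≡ 0`.
-/

section

variable {A Γ : Type*} [LinearOrderedAddCommMonoidWithTop Γ]

lemma addValuation_natCast_nonneg [Ring A] (v : AddValuation A Γ) (n : ℕ) : 0 ≤ v (n : A) := by
  induction n with
  | zero => simp
  | succ n ih => exact Nat.cast_succ (R := A) n ▸ v.map_le_add ih v.map_one.ge

variable [CommRing A] (v : AddValuation A Γ)

lemma addValuation_b₂_eq_zero {W : WeierstrassCurve A} (hc₄ : v W.c₄ = 0) (hb₄ : 0 < v W.b₄) :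
    v W.b₂ = 0 := by
  have b₂_sq : W.b₂ ^ 2 = W.c₄ + (24 : ℕ) * W.b₄ := by
    rw [c₄]
    push_cast
    ring
  have c₄_lt : v W.c₄ < v ((24 : ℕ) * W.b₄) := by
    rw [hc₄, v.map_mul]
    exact hb₄.trans_le (le_add_of_nonneg_left (addValuation_natCast_nonneg v 24))
  have two_nsmul : 2 • v W.b₂ = 0 := by
    rw [← v.map_pow, b₂_sq, v.map_add_eq_of_lt_left c₄_lt, hc₄]
  exact le_antisymm ((nsmul_nonpos_iff two_ne_zero).mp two_nsmul.le)
    ((nsmul_nonneg_iff two_ne_zero).mp two_nsmul.ge)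

theorem statement2_general {a b : A} (ha : 0 ≤ v a)
    (hc₄ : v (⟨0, a, 0, -(2 * a * b), a * b ^ 2⟩ : WeierstrassCurve A).c₄ = 0)
    (hsingX : 0 < v (2 * a * b)) :
    v a = 0 ∧ 0 < v b := by
  have two_nonneg : 0 ≤ v 2 := mod_cast addValuation_natCast_nonneg v 2
  have b₄_pos : 0 < v (⟨0, a, 0, -(2 * a * b), a * b ^ 2⟩ : WeierstrassCurve A).b₄ := by
    simpa [b₄] using hsingX.trans_le (le_add_of_nonneg_left two_nonneg)
  have two_mul_two_mul_a : v (2 * (2 * a)) = 0 := by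
    rw [← addValuation_b₂_eq_zero v hc₄ b₄_pos, b₂]
    ring_nf
  obtain ⟨two_eq, a_eq⟩ : v 2 = 0 ∧ v a = 0 := by
    rw [v.map_mul, v.map_mul,
      add_eq_zero_iff_of_nonneg two_nonneg (add_nonneg two_nonneg ha),
      add_eq_zero_iff_of_nonneg two_nonneg ha] at two_mul_two_mul_a
    exact two_mul_two_mul_a.2
  refine ⟨a_eq, ?_⟩
  simpa only [v.map_mul, two_eq, a_eq, zero_add] using hsingX

end

/-- Let `K` be an algebraically closed field with a nontrivial non-archimedean
valuation `v` whose residue field has characteristic ≠ 2, 3 (encoded by `v 2 = 0`, `v 3 = 0`).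
Let `a, b` lie in the valuation ring and suppose `W : y² = x³ + a(x − b)²` is a minimal
integral Weierstrass model of an elliptic curve (so `Δ ≠ 0`).  Let `a'` be a square root of
`a` and `P = (0, a'·b)`.  Suppose `E` has multiplicative reduction (`v Δ > 0`, `v c₄ = 0`)
and that `P` reduces to the singular point of the reduced curve, i.e. both partial derivatives
of the reduced Weierstrass polynomial vanish at the reduction of `P`: the partial derivatives at
`P` are `∂/∂x = 2ab` and `∂/∂y = 2a'b`, and their valuations are positive.
Then `v a = 0` and `v b > 0`. -/
theorem statement2 {K : Type*} [Field K] [IsAlgClosed K] (v : AddValuation K (WithTop ℝ))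
    (hv : ∃ x : K, x ≠ 0 ∧ v x ≠ 0) (hv2 : v (2 : K) = 0) (hv3 : v (3 : K) = 0)
    (a b a' : K) (ha : 0 ≤ v a) (hb : 0 ≤ v b) (ha' : a' ^ 2 = a)
    (hΔ : (⟨0, a, 0, -(2 * a * b), a * b ^ 2⟩ : WeierstrassCurve K).Δ ≠ 0)
    (hmin : IsMinimalModel v (⟨0, a, 0, -(2 * a * b), a * b ^ 2⟩ : WeierstrassCurve K)
      (⟨0, a, 0, -(2 * a * b), a * b ^ 2⟩ : WeierstrassCurve K))
    (hmult : 0 < v (⟨0, a, 0, -(2 * a * b), a * b ^ 2⟩ : WeierstrassCurve K).Δ ∧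
      v (⟨0, a, 0, -(2 * a * b), a * b ^ 2⟩ : WeierstrassCurve K).c₄ = 0)
    (hsingX : 0 < v (2 * a * b)) (hsingY : 0 < v (2 * a' * b)) :
    v a = 0 ∧ 0 < v b :=
  statement2_general v ha hmult.2 hsingX
end

section
/- Let K be an algebraically closed field with a nontrivial non-archimedean valuation v: K* → ℝ, valuation ring R, and residue field k of characteristic different from 2 and 3. Let E be an elliptic curve over K with v(j(E)) < 0. Then there exist a, b ∈ R with v(a) = 0 and 0 < v(b) < ∞ such that y² = x³ + a·(x − b)² is a minimal integral Weierstrass model of E. -/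
open WeierstrassCurve

/-!
A change of variables scales `c₄` by `u⁻⁴` and `Δ` by `u⁻¹²`, so `c₄'³Δ = c₄³Δ'` for any two models
of the same curve, and an integral model whose `c₄` is a unit is therefore minimal. For
`y² = x³ + a(x - b)²` one has `c₄ = 16a(a + 6b)`, a unit as soon as `2` and `a` are units and
`v b > 0`. It remains to find `b` with `v b > 0` realising the `j`-invariant with `a = 1`, that is,
a root of `j X³(27X + 4) + 256(6X + 1)³`. The constant coefficient of this polynomial has valuation
`0` and its cubic coefficient has valuation `v j < 0`, so its Newton polygon descends to the right
of the origin and one of the roots has positive valuation. The curve so obtained is isomorphic to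
`E` because `K` is algebraically closed.
-/

open Polynomial

section AddValuation

variable {R Γ₀ : Type*} [CommRing R] [LinearOrderedAddCommMonoidWithTop Γ₀]
  (v : AddValuation R Γ₀)

/-- The valuation ring of `v`. Mathlib's `Valuation.integer` is multiplicative and asks for a value
group, whereas a value monoid suffices here. -/
def nonnegSubring : Subring R where
  carrier := {x | 0 ≤ v x}
  mul_mem' hx hy := (add_nonneg hx hy).trans_eq (v.map_mul _ _).symm
  one_mem' := v.map_one.ge
  add_mem' := v.map_le_add
  zero_mem' := le_top.trans_eq v.map_zero.symm
  neg_mem' hx := hx.trans_eq (v.map_neg _).symm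

lemma mem_nonnegSubring_iff {x : R} : x ∈ nonnegSubring v ↔ 0 ≤ v x :=
  Iff.rfl

lemma map_add_natCast_mul_eq_zero {x y : R} (hx : v x = 0) (hy : 0 < v y) (n : ℕ) :
    v (x + n * y) = 0 := by
  have hn : 0 ≤ v (n : R) := (mem_nonnegSubring_iff v).1 (natCast_mem _ n)
  have hny : v x < v (n * y) := by
    rw [hx, v.map_mul]
    exact hy.trans_le (le_add_of_nonneg_left hn)
  rw [v.map_add_eq_of_lt_left hny, hx]

lemma map_coeff_zero_X_sub_C_mul_le {r : R} (hr : v r ≤ 0) {q : R[X]}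
    (hq : ∀ n, v (q.coeff 0) ≤ v (q.coeff n)) (n : ℕ) :
    v (((X - C r) * q).coeff 0) ≤ v (((X - C r) * q).coeff n) := by
  have hr_mul (m : ℕ) : v r + v (q.coeff 0) ≤ v (r * q.coeff m) := by
    rw [v.map_mul]
    gcongr
    exact hq m
  have hzero : v (((X - C r) * q).coeff 0) = v r + v (q.coeff 0) := by
    simp [sub_mul, v.map_neg, v.map_mul]
  cases n with
  | zero => exact le_rfl
  | succ m =>
    rw [hzero, sub_mul, coeff_sub, coeff_X_mul, coeff_C_mul]
    exact v.map_le_sub ((add_le_of_nonpos_left hr).trans (hq m)) (hr_mul (m + 1))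

lemma map_coeff_zero_C_mul_prod_X_sub_C_le (c : R) {s : Multiset R}
    (hs : ∀ r ∈ s, v r ≤ 0) (n : ℕ) :
    v ((C c * (s.map fun r => X - C r).prod).coeff 0) ≤
      v ((C c * (s.map fun r => X - C r).prod).coeff n) := by
  induction s using Multiset.induction_on generalizing n with
  | empty => cases n <;> simp [coeff_C]
  | cons r s ih =>
    rw [Multiset.map_cons, Multiset.prod_cons, mul_left_comm]
    exact map_coeff_zero_X_sub_C_mul_le v (hs r (Multiset.mem_cons_self r s))
      (ih fun t ht => hs t (Multiset.mem_cons_of_mem ht)) n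

theorem exists_root_map_pos_of_map_coeff_lt [IsDomain R] {p : R[X]} (hp : p.Splits) {n : ℕ}
    (hn : v (p.coeff n) < v (p.coeff 0)) : ∃ r ∈ p.roots, 0 < v r := by
  by_contra! hroots
  have hle := map_coeff_zero_C_mul_prod_X_sub_C_le v p.leadingCoeff hroots n
  rw [← hp.eq_prod_roots] at hle
  exact hn.not_ge hle

end AddValuation

section Models

variable {K : Type*} [Field K] {E W W' : WeierstrassCurve K}

namespace IsModelOf

lemma of_common (hW : IsModelOf E W) (hW' : IsModelOf E W') : IsModelOf W W' := by
  obtain ⟨C, rfl⟩ := hW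
  obtain ⟨D, rfl⟩ := hW'
  exact ⟨D * C⁻¹, by rw [mul_smul, inv_smul_smul]⟩

lemma c₄_pow_three_mul_Δ (h : IsModelOf E W) : W.c₄ ^ 3 * E.Δ = E.c₄ ^ 3 * W.Δ := by
  obtain ⟨C, rfl⟩ := h
  rw [variableChange_c₄, variableChange_Δ]
  ring

lemma of_c₄_pow_three_div_Δ_eq [IsSepClosed K] (hE : E.Δ ≠ 0) (hW : W.Δ ≠ 0)
    (h : E.c₄ ^ 3 / E.Δ = W.c₄ ^ 3 / W.Δ) : IsModelOf E W := by
  have : E.IsElliptic := ⟨hE.isUnit⟩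
  have : W.IsElliptic := ⟨hW.isUnit⟩
  have hj : E.j = W.j := by
    simpa only [WeierstrassCurve.j, Units.val_inv_eq_inv_val, coe_Δ', div_eq_inv_mul] using h
  obtain ⟨C, hC⟩ := exists_variableChange_of_j_eq E W hj
  exact ⟨C, hC.symm⟩

end IsModelOf

variable {v : AddValuation K (WithTop ℝ)}

lemma IsIntegralModel.map_c₄_nonneg (h : IsIntegralModel v W) : 0 ≤ v W.c₄ := by
  simp only [IsIntegralModel, ← mem_nonnegSubring_iff] at h
  obtain ⟨h₁, h₂, h₃, h₄, -⟩ := h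
  rw [← mem_nonnegSubring_iff, c₄, b₂, b₄]
  have hb₂ := add_mem (pow_mem h₁ 2) (mul_mem (ofNat_mem _ 4) h₂)
  have hb₄ := add_mem (mul_mem (ofNat_mem _ 2) h₄) (mul_mem h₁ h₃)
  exact sub_mem (pow_mem hb₂ 2) (mul_mem (ofNat_mem _ 24) hb₄)

theorem IsIntegralModel.isMinimalModel_of_map_c₄_eq_zero (hW : IsIntegralModel v W)
    (hEW : IsModelOf E W) (hc₄ : v W.c₄ = 0) : IsMinimalModel v E W := by
  refine ⟨hEW, hW, fun W' hEW' hW' => ?_⟩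
  have hc₄' : 0 ≤ 3 • v W'.c₄ := nsmul_nonneg hW'.map_c₄_nonneg 3
  calc
    v W.Δ ≤ 3 • v W'.c₄ + v W.Δ := le_add_of_nonneg_left hc₄'
    _ = v (W'.c₄ ^ 3 * W.Δ) := by rw [v.map_mul, v.map_pow]
    _ = v (W.c₄ ^ 3 * W'.Δ) := by rw [(hEW.of_common hEW').c₄_pow_three_mul_Δ]
    _ = v W'.Δ := by rw [v.map_mul, v.map_pow, hc₄, nsmul_zero, zero_add]

end Models

/-- The Weierstrass curve `y² = x³ + a(x - b)²`, with the right-hand side expanded. Modulo `b` it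
has a node at the origin when `a` is a unit. -/
def cubicAddMulSq {R : Type*} [CommRing R] (a b : R) : WeierstrassCurve R :=
  ⟨0, a, 0, -(2 * a * b), a * b ^ 2⟩

namespace cubicAddMulSq

section CommRing

variable {R : Type*} [CommRing R] (a b j : R)

lemma c₄_eq : (cubicAddMulSq a b).c₄ = 2 ^ 4 * (a * (a + 6 * b)) := by
  simp only [cubicAddMulSq, c₄, b₂, b₄]
  ring

lemma Δ_eq : (cubicAddMulSq a b).Δ = -(2 ^ 4 * a ^ 2 * b ^ 3 * (4 * a + 27 * b)) := by
  simp only [cubicAddMulSq, Δ, b₂, b₄, b₆, b₈]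
  ring

/-- The polynomial in `b` whose vanishing says that `y² = x³ + (x - b)²` has `j`-invariant `j`, with
a common factor `16` removed. -/
noncomputable def jPolynomial : R[X] :=
  C j * X ^ 3 * (27 * X + 4) + 256 * (6 * X + 1) ^ 3

lemma coeff_zero_jPolynomial : (jPolynomial j).coeff 0 = 2 ^ 8 := by
  have heval : (jPolynomial j).eval 0 = 256 := by simp [jPolynomial]
  rw [coeff_zero_eq_eval_zero, heval]
  norm_num

lemma coeff_three_jPolynomial : (jPolynomial j).coeff 3 = 2 ^ 2 * j + 2 ^ 11 * 27 := by
  have hexpand : jPolynomial j = C (27 * j) * X ^ 4 + C (2 ^ 2 * j + 2 ^ 11 * 27) * X ^ 3 +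
      C (2 ^ 10 * 27) * X ^ 2 + C (2 ^ 9 * 9) * X + C (2 ^ 8) := by
    simp only [jPolynomial, map_add, map_mul, map_pow, map_ofNat]
    ring
  simp only [hexpand, coeff_add, coeff_C_mul, coeff_X_pow, coeff_X, coeff_C]
  norm_num

variable {a b j} {Γ₀ : Type*} [LinearOrderedAddCommMonoidWithTop Γ₀] {v : AddValuation R Γ₀}

lemma map_c₄_eq_zero (h2 : v 2 = 0) (ha : v a = 0) (hb : 0 < v b) :
    v (cubicAddMulSq a b).c₄ = 0 := by
  have h6b : v (a + 6 * b) = 0 := map_add_natCast_mul_eq_zero v ha hb 6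
  simp only [c₄_eq, v.map_mul, v.map_pow, h2, ha, h6b, nsmul_zero, add_zero]

lemma c₄_pow_three_eq_of_isRoot_jPolynomial (hb : (jPolynomial j).IsRoot b) :
    (cubicAddMulSq 1 b).c₄ ^ 3 = j * (cubicAddMulSq 1 b).Δ := by
  have heval : j * b ^ 3 * (27 * b + 4) + 256 * (6 * b + 1) ^ 3 = 0 := by
    simpa [jPolynomial] using hb
  rw [c₄_eq, Δ_eq]
  linear_combination 16 * heval

lemma map_coeff_three_jPolynomial_lt (h2 : v 2 = 0) (hj : v j < 0) :
    v ((jPolynomial j).coeff 3) < v ((jPolynomial j).coeff 0) := by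
  have h4j : v (2 ^ 2 * j) = v j := by rw [v.map_mul, v.map_pow, h2, nsmul_zero, zero_add]
  have hint : 0 ≤ v (2 ^ 11 * 27 : R) := (mem_nonnegSubring_iff v).1
    (mul_mem (pow_mem (ofNat_mem _ 2) 11) (ofNat_mem _ 27))
  have hlt : v (2 ^ 2 * j) < v (2 ^ 11 * 27 : R) := h4j ▸ hj.trans_le hint
  rwa [coeff_three_jPolynomial, coeff_zero_jPolynomial, v.map_add_eq_of_lt_left hlt, h4j,
    v.map_pow, h2, nsmul_zero]

end CommRing

variable {K : Type*} [Field K]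

lemma isIntegralModel {v : AddValuation K (WithTop ℝ)} {a b : K} (ha : 0 ≤ v a) (hb : 0 ≤ v b) :
    IsIntegralModel v (cubicAddMulSq a b) := by
  simp only [IsIntegralModel, ← mem_nonnegSubring_iff] at ha hb ⊢
  exact ⟨zero_mem _, ha, zero_mem _, neg_mem (mul_mem (mul_mem (ofNat_mem _ 2) ha) hb),
    mul_mem ha (pow_mem hb 2)⟩

variable {Γ₀ : Type*} [LinearOrderedAddCommMonoidWithTop Γ₀] {v : AddValuation K Γ₀} {j : K}

theorem exists_map_pos_c₄_pow_three_eq [IsAlgClosed K] (h2 : v 2 = 0) (hj : v j < 0) :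
    ∃ b : K, 0 < v b ∧ (cubicAddMulSq 1 b).c₄ ^ 3 = j * (cubicAddMulSq 1 b).Δ := by
  obtain ⟨b, hroot, hb⟩ := exists_root_map_pos_of_map_coeff_lt v
    (IsAlgClosed.splits (jPolynomial j)) (map_coeff_three_jPolynomial_lt h2 hj)
  exact ⟨b, hb, c₄_pow_three_eq_of_isRoot_jPolynomial (isRoot_of_mem_roots hroot)⟩

end cubicAddMulSq

theorem statement3_general {K : Type*} [Field K] [IsAlgClosed K] (v : AddValuation K (WithTop ℝ))
    (hv2 : v (2 : K) = 0) (E : WeierstrassCurve K) (hΔ : E.Δ ≠ 0)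
    (hj : v (E.c₄ ^ 3 / E.Δ) < 0) :
    ∃ b : K, 0 < v b ∧ v b ≠ ⊤ ∧ IsMinimalModel v E (cubicAddMulSq 1 b) := by
  obtain ⟨b, hb, hjb⟩ := cubicAddMulSq.exists_map_pos_c₄_pow_three_eq hv2 hj
  have hc₄ : v (cubicAddMulSq 1 b).c₄ = 0 := cubicAddMulSq.map_c₄_eq_zero hv2 v.map_one hb
  have hc₄_ne : (cubicAddMulSq 1 b).c₄ ≠ 0 := v.ne_top_iff.1 (hc₄ ▸ WithTop.zero_ne_top)
  have hΔb : (cubicAddMulSq 1 b).Δ ≠ 0 := right_ne_zero_of_mul (hjb ▸ pow_ne_zero 3 hc₄_ne)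
  have hb_ne : b ≠ 0 := by
    rintro rfl
    exact hΔb (by simp [cubicAddMulSq.Δ_eq])
  have hmodel : IsModelOf E (cubicAddMulSq 1 b) :=
    .of_c₄_pow_three_div_Δ_eq hΔ hΔb (eq_div_of_mul_eq hΔb hjb.symm)
  have hint : IsIntegralModel v (cubicAddMulSq 1 b) :=
    cubicAddMulSq.isIntegralModel v.map_one.ge hb.le
  exact ⟨b, hb, v.ne_top_iff.2 hb_ne, hint.isMinimalModel_of_map_c₄_eq_zero hmodel hc₄⟩

/-- Let `K` be an algebraically closed field with a nontrivial non-archimedean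
valuation `v` whose residue field has characteristic ≠ 2, 3, and let `E` be an elliptic curve
over `K` with `v (j E) < 0`.  Then there exist `a, b ∈ K` with `v a = 0` and
`0 < v b < ∞` such that `y² = x³ + a(x − b)²` is a minimal integral Weierstrass model
of `E`. -/
theorem statement3 {K : Type*} [Field K] [IsAlgClosed K] (v : AddValuation K (WithTop ℝ))
    (hv : ∃ x : K, x ≠ 0 ∧ v x ≠ 0) (hv2 : v (2 : K) = 0) (hv3 : v (3 : K) = 0)
    (E : WeierstrassCurve K) (hΔ : E.Δ ≠ 0) (hj : v (E.c₄ ^ 3 / E.Δ) < 0) :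
    ∃ a b : K, v a = 0 ∧ 0 < v b ∧ v b ≠ ⊤ ∧
      IsMinimalModel v E (⟨0, a, 0, -(2 * a * b), a * b ^ 2⟩ : WeierstrassCurve K) := by
  obtain ⟨b, hb, hb_top, hmin⟩ := statement3_general v hv2 E hΔ hj
  exact ⟨1, b, v.map_one, hb, hb_top, hmin⟩
end

section
/- Let K be a field of characteristic different from 2, let a', b ∈ K, and let (x, y) ∈ K² satisfy y² = x³ + a'²·(x − b)² with x ≠ 0. Then y − a'·(x − b) ≠ 0 and y + a'·(x − b) ≠ 0, and setting f = x²/(y − a'(x − b)) and g = x²/(y + a'(x − b)), one has f·g = x, f²·g = y + a'(x − b), and the relation f·g² + 2a'·f·g − 2a'·b − f²·g = 0. -/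
/-!
Put `ℓ = a' (x - b)`, `u = y - ℓ` and `v = y + ℓ`, so that the curve is `u v = x³`. Then
`f = x² / u` and `g = x² / v` satisfy `f g = x`, `f² g = v` and `f g² = u`, and the relation between
`f` and `g` is `v - u = 2 ℓ` with `x`, `u` and `v` replaced by these monomials.
-/

section CommGroupWithZero

variable {G : Type*} [CommGroupWithZero G] {u v x : G}

lemma left_ne_zero_of_mul_eq_cube (huv : u * v = x ^ 3) (hx : x ≠ 0) : u ≠ 0 :=
  left_ne_zero_of_mul (huv ▸ pow_ne_zero 3 hx)

lemma mul_sq_div_of_mul_eq_cube (huv : u * v = x ^ 3) (hx : x ≠ 0) : x * (x ^ 2 / u) = v := by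
  have hu : u ≠ 0 := left_ne_zero_of_mul_eq_cube huv hx
  calc x * (x ^ 2 / u) = x ^ 3 / u := by rw [← mul_div_assoc, ← pow_succ']
    _ = v := by rw [← huv, mul_div_cancel_left₀ v hu]

lemma sq_div_mul_sq_div_of_mul_eq_cube (huv : u * v = x ^ 3) (hx : x ≠ 0) :
    x ^ 2 / u * (x ^ 2 / v) = x := by
  calc x ^ 2 / u * (x ^ 2 / v) = x * x ^ 3 / x ^ 3 := by
        rw [div_mul_div_comm, huv, ← pow_add, ← pow_succ']
    _ = x := mul_div_cancel_right₀ x (pow_ne_zero 3 hx)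

lemma sq_div_sq_mul_sq_div_of_mul_eq_cube (huv : u * v = x ^ 3) (hx : x ≠ 0) :
    (x ^ 2 / u) ^ 2 * (x ^ 2 / v) = v := by
  calc (x ^ 2 / u) ^ 2 * (x ^ 2 / v) = x ^ 2 / u * (x ^ 2 / v) * (x ^ 2 / u) := by
        rw [sq, mul_right_comm]
    _ = x * (x ^ 2 / u) := by rw [sq_div_mul_sq_div_of_mul_eq_cube huv hx]
    _ = v := mul_sq_div_of_mul_eq_cube huv hx

end CommGroupWithZero

theorem statement4_general {K : Type*} [Field K] {x y ℓ : K} (heq : y ^ 2 = x ^ 3 + ℓ ^ 2)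
    (hx : x ≠ 0) :
    y - ℓ ≠ 0 ∧ y + ℓ ≠ 0 ∧
    x ^ 2 / (y - ℓ) * (x ^ 2 / (y + ℓ)) = x ∧
    (x ^ 2 / (y - ℓ)) ^ 2 * (x ^ 2 / (y + ℓ)) = y + ℓ ∧
    x ^ 2 / (y - ℓ) * (x ^ 2 / (y + ℓ)) ^ 2 = y - ℓ := by
  have huv : (y - ℓ) * (y + ℓ) = x ^ 3 := by linear_combination heq
  have hvu : (y + ℓ) * (y - ℓ) = x ^ 3 := by rw [mul_comm, huv]
  refine ⟨left_ne_zero_of_mul_eq_cube huv hx, left_ne_zero_of_mul_eq_cube hvu hx,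
    sq_div_mul_sq_div_of_mul_eq_cube huv hx, sq_div_sq_mul_sq_div_of_mul_eq_cube huv hx, ?_⟩
  rw [mul_comm, sq_div_sq_mul_sq_div_of_mul_eq_cube hvu hx]

/-- Let `K` be a field of characteristic ≠ 2, let `a', b ∈ K`, and let
`(x, y) ∈ K²` satisfy `y² = x³ + a'²·(x − b)²` with `x ≠ 0`.  Then `y − a'(x − b) ≠ 0` and
`y + a'(x − b) ≠ 0`, and setting `f = x²/(y − a'(x − b))` and `g = x²/(y + a'(x − b))` one has
`f·g = x`, `f²·g = y + a'(x − b)` and `f·g² + 2a'·f·g − 2a'·b − f²·g = 0`. -/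
theorem statement4 {K : Type*} [Field K] (h2 : (2 : K) ≠ 0) (a' b x y : K)
    (heq : y ^ 2 = x ^ 3 + a' ^ 2 * (x - b) ^ 2) (hx : x ≠ 0) :
    y - a' * (x - b) ≠ 0 ∧ y + a' * (x - b) ≠ 0 ∧
    (x ^ 2 / (y - a' * (x - b))) * (x ^ 2 / (y + a' * (x - b))) = x ∧
    (x ^ 2 / (y - a' * (x - b))) ^ 2 * (x ^ 2 / (y + a' * (x - b))) = y + a' * (x - b) ∧
    (x ^ 2 / (y - a' * (x - b))) * (x ^ 2 / (y + a' * (x - b))) ^ 2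
      + 2 * a' * ((x ^ 2 / (y - a' * (x - b))) * (x ^ 2 / (y + a' * (x - b))))
      - 2 * a' * b
      - (x ^ 2 / (y - a' * (x - b))) ^ 2 * (x ^ 2 / (y + a' * (x - b))) = 0 := by
  obtain ⟨hu, hv, hfg, hffg, hfgg⟩ :=
    statement4_general (ℓ := a' * (x - b)) (by rw [heq, mul_pow]) hx
  exact ⟨hu, hv, hfg, hffg, by linear_combination hfgg + 2 * a' * hfg - hffg⟩
end

section
/- Let K be a field of characteristic different from 2 and 3, let a', b ∈ K with a'·b ≠ 0, and suppose the Weierstrass equation E: y² = x³ + a'²·(x − b)² has nonzero discriminant, so that E is an elliptic curve. Then the point P = (0, a'·b) lies in E(K), P ≠ O, and 3·P = O in the group law of E; that is, P is a point of exact order 3. -/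
/-!
The tangent to `E` at `P = (0, a'b)` is `y = -a'(x - b)`. Substituting this line into
`y² = x³ + a'²(x - b)²` leaves `x³ = 0`, so it meets `E` at `P` with multiplicity three: `P` is an
inflection point. Hence `2P = -P`, and `P ≠ O` has order exactly `3`.
-/

open WeierstrassCurve

section InflectionPoint

variable {F : Type*} [Field F] [DecidableEq F] {W : Affine F} {x y : F}

theorem add_self_eq_neg_iff_addX_slope_eq (h : W.Nonsingular x y) (hy : y ≠ W.negY x y) :
    Affine.Point.some x y h + Affine.Point.some x y h = -Affine.Point.some x y h ↔
      W.addX x x (W.slope x x y y) = x := by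
  rw [Affine.Point.add_self_of_Y_ne hy, Affine.Point.neg_some, Affine.Point.some.injEq]
  refine ⟨And.left, fun hx ↦ ⟨hx, ?_⟩⟩
  rw [Affine.addY, Affine.negAddY, hx, sub_self, mul_zero, zero_add]

theorem addOrderOf_some_eq_three_iff (h : W.Nonsingular x y) (hy : y ≠ W.negY x y) :
    addOrderOf (Affine.Point.some x y h) = 3 ↔ W.addX x x (W.slope x x y y) = x := by
  have : Fact (Nat.Prime 3) := ⟨Nat.prime_three⟩
  rw [addOrderOf_eq_prime_iff, and_iff_left (Affine.Point.some_ne_zero h), succ_nsmul, two_nsmul,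
    add_eq_zero_iff_eq_neg, add_self_eq_neg_iff_addX_slope_eq h hy]

end InflectionPoint

/-- The Weierstrass cubic `y² = x³ + a²(x - b)²`, with the square expanded to read off the
coefficients. It is allowed to be singular. -/
def inflectionCubic {R : Type*} [CommRing R] (a b : R) : WeierstrassCurve R :=
  ⟨0, a ^ 2, 0, -(2 * a ^ 2 * b), a ^ 2 * b ^ 2⟩

namespace inflectionCubic

theorem equation_zero_mul {R : Type*} [CommRing R] (a b : R) :
    (inflectionCubic a b).toAffine.Equation 0 (a * b) := by
  rw [Affine.equation_iff]
  simp only [inflectionCubic]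
  ring

theorem negY_eq_neg {R : Type*} [CommRing R] (a b x y : R) :
    (inflectionCubic a b).toAffine.negY x y = -y := by
  simp [Affine.negY, inflectionCubic]

theorem addX_zero_neg {R : Type*} [CommRing R] (a b : R) :
    (inflectionCubic a b).toAffine.addX 0 0 (-a) = 0 := by
  simp [Affine.addX, inflectionCubic]

variable {K : Type*} [Field K] {a b : K}

theorem mul_ne_negY (h2 : (2 : K) ≠ 0) (hab : a * b ≠ 0) :
    a * b ≠ (inflectionCubic a b).toAffine.negY 0 (a * b) := by
  rw [negY_eq_neg, ne_eq, eq_neg_iff_add_eq_zero, ← two_mul]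
  exact mul_ne_zero h2 hab

theorem nonsingular_zero_mul (h2 : (2 : K) ≠ 0) (hab : a * b ≠ 0) :
    (inflectionCubic a b).toAffine.Nonsingular 0 (a * b) :=
  (Affine.nonsingular_iff _ _).mpr ⟨equation_zero_mul a b, Or.inr (mul_ne_negY h2 hab)⟩

theorem slope_zero_mul [DecidableEq K] (h2 : (2 : K) ≠ 0) (hab : a * b ≠ 0) :
    (inflectionCubic a b).toAffine.slope 0 0 (a * b) (a * b) = -a := by
  have hy := mul_ne_negY h2 hab
  rw [Affine.slope_of_Y_ne rfl hy, div_eq_iff (sub_ne_zero.mpr hy), negY_eq_neg]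
  simp only [inflectionCubic]
  ring

theorem addOrderOf_zero_mul [DecidableEq K] (h2 : (2 : K) ≠ 0) (hab : a * b ≠ 0) :
    addOrderOf (Affine.Point.some _ _ (nonsingular_zero_mul h2 hab)) = 3 := by
  rw [addOrderOf_some_eq_three_iff _ (mul_ne_negY h2 hab), slope_zero_mul h2 hab, addX_zero_neg]

end inflectionCubic

open scoped Classical in
theorem statement7_general {K : Type*} [Field K] (h2 : (2 : K) ≠ 0) (a' b : K)
    (hab : a' * b ≠ 0) :
    ∃ h : (inflectionCubic a' b).toAffine.Nonsingular 0 (a' * b),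
      Affine.Point.some _ _ h ≠ 0 ∧ 3 • (Affine.Point.some _ _ h) = 0 ∧
        addOrderOf (Affine.Point.some _ _ h) = 3 := by
  have horder := inflectionCubic.addOrderOf_zero_mul h2 hab
  exact ⟨inflectionCubic.nonsingular_zero_mul h2 hab, Affine.Point.some_ne_zero _,
    addOrderOf_dvd_iff_nsmul_eq_zero.mp horder.dvd, horder⟩

open scoped Classical in
/-- Let `K` be a field of characteristic ≠ 2, 3, let `a', b ∈ K` with
`a'·b ≠ 0`, and suppose the Weierstrass equation `E : y² = x³ + a'²·(x − b)²` has nonzero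
discriminant.  Then `P = (0, a'·b)` lies in `E(K)`, `P ≠ O`, and `3·P = O`; that is, `P` is a
point of exact order 3. -/
theorem statement7 {K : Type*} [Field K] (h2 : (2 : K) ≠ 0) (h3 : (3 : K) ≠ 0) (a' b : K)
    (hab : a' * b ≠ 0)
    (hΔ : (⟨0, a' ^ 2, 0, -(2 * a' ^ 2 * b), a' ^ 2 * b ^ 2⟩ : WeierstrassCurve K).Δ ≠ 0) :
    ∃ h : (⟨0, a' ^ 2, 0, -(2 * a' ^ 2 * b), a' ^ 2 * b ^ 2⟩ :
        WeierstrassCurve K).toAffine.Nonsingular 0 (a' * b),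
      Affine.Point.some _ _ h ≠ 0 ∧ 3 • (Affine.Point.some _ _ h) = 0 ∧
        addOrderOf (Affine.Point.some _ _ h) = 3 := by
  exact statement7_general h2 a' b hab
end

section
/- Let K be an algebraically closed field of characteristic different from 2 and 3, and let E ⊂ P² be an elliptic curve given by a homogeneous Weierstrass cubic F(X,Y,Z) = 0 with identity O = [0:1:0]. Let P be an affine K-point of E and let L be the tangent line to E at P, i.e. the line (∂F/∂X)(P)·X + (∂F/∂Y)(P)·Y + (∂F/∂Z)(P)·Z = 0. Then 3·P = O in the group law of E if and only if P is an inflection point, i.e. the only point of E(K) lying on L is P itself. -/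
open WeierstrassCurve

/-!
The tangent line to a Weierstrass curve at a point `P` meets the curve exactly in `P` and `-2P`:
by Euler's relation the projective tangent line is the affine one, along which the Weierstrass cubic
factors as `-(x - x(P))²(x - x(-2P))`; when this line is vertical, `-2P` is the point at infinity.
So `P` is the only point of the curve on its tangent line if and only if `-2P = P`.
-/

section CommRing

variable {R : Type*} [CommRing R] {W : WeierstrassCurve R}

lemma evalEval_polynomialY_eq_sub_negY (x y : R) :
    W.toAffine.polynomialY.evalEval x y = y - W.toAffine.negY x y := by
  rw [Affine.evalEval_polynomialY, Affine.negY]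
  ring

lemma eval_addPolynomial_eq_zero_iff {x₀ y₀ ℓ x : R} :
    (W.toAffine.addPolynomial x₀ y₀ ℓ).eval x = 0 ↔
      W.toAffine.Equation x (ℓ * (x - x₀) + y₀) := by
  simp [Affine.addPolynomial, Affine.linePolynomial, Affine.polynomial, Affine.equation_iff',
    add_mul, add_assoc]

/-- The linear form `F_X(P) X + F_Y(P) Y + F_Z(P) Z` evaluated at `Q`, where `F` is the homogeneous
Weierstrass cubic of `W`. When `P` is a nonsingular point of `W`, its zero locus is the tangent line
at `P`. -/
noncomputable def tangentForm (W : WeierstrassCurve R) (P Q : Fin 3 → R) : R :=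
  MvPolynomial.eval P W.toProjective.polynomialX * Q 0 +
    MvPolynomial.eval P W.toProjective.polynomialY * Q 1 +
    MvPolynomial.eval P W.toProjective.polynomialZ * Q 2

lemma tangentForm_zero (Q : Fin 3 → R) : tangentForm W ![0, 1, 0] Q = Q 2 := by
  simp [tangentForm, Projective.eval_polynomialX, Projective.eval_polynomialY,
    Projective.eval_polynomialZ]

lemma tangentForm_some_zero (x₀ y₀ : R) :
    tangentForm W ![x₀, y₀, 1] ![0, 1, 0] = 2 * y₀ + W.a₁ * x₀ + W.a₃ := by
  simp [tangentForm, Projective.eval_polynomialY]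

lemma tangentForm_some_some (x₀ y₀ x y : R) :
    tangentForm W ![x₀, y₀, 1] ![x, y, 1] =
      (W.a₁ * y₀ - 3 * x₀ ^ 2 - 2 * W.a₂ * x₀ - W.a₄) * x
        + (2 * y₀ + W.a₁ * x₀ + W.a₃) * y
        + (y₀ ^ 2 + W.a₁ * x₀ * y₀ + 2 * W.a₃ * y₀
            - W.a₂ * x₀ ^ 2 - 2 * W.a₄ * x₀ - 3 * W.a₆) := by
  simp only [tangentForm, Projective.eval_polynomialX, Projective.eval_polynomialY,
    Projective.eval_polynomialZ, Projective.fin3_def_ext]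
  ring

lemma tangentForm_some_some_of_equation {x₀ y₀ : R} (h : W.toAffine.Equation x₀ y₀) (x y : R) :
    tangentForm W ![x₀, y₀, 1] ![x, y, 1] =
      W.toAffine.polynomialX.evalEval x₀ y₀ * (x - x₀) +
        W.toAffine.polynomialY.evalEval x₀ y₀ * (y - y₀) := by
  rw [tangentForm_some_some, Affine.evalEval_polynomialX, Affine.evalEval_polynomialY]
  linear_combination 3 * (Affine.equation_iff' x₀ y₀).mp h

/-- Homogeneous coordinates of a point: `[0 : 1 : 0]` for the identity and `[x : y : 1]` for an
affine point `(x, y)`. -/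
def homogeneousCoords : W.toAffine.Point → Fin 3 → R
  | .zero => ![0, 1, 0]
  | .some x y _ => ![x, y, 1]

/-- The point `Q` lies on the tangent line at `P`, both points being given by their homogeneous
coordinates, so that the identity is a possible value of either. -/
def OnTangentLine (P Q : W.toAffine.Point) : Prop :=
  tangentForm W (homogeneousCoords P) (homogeneousCoords Q) = 0

/-- `P` is an inflection point: the only rational point of the curve on the tangent line at `P` is
`P` itself. This replaces the condition that the line meets the curve at `P` with multiplicity
three. -/
def IsInflectionPoint (P : W.toAffine.Point) : Prop :=
  ∀ Q : W.toAffine.Point, OnTangentLine P Q → Q = P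

lemma onTangentLine_some_zero_iff {x₀ y₀ : R} (h : W.toAffine.Nonsingular x₀ y₀) :
    OnTangentLine (.some x₀ y₀ h) 0 ↔ 2 * y₀ + W.a₁ * x₀ + W.a₃ = 0 := by
  rw [← tangentForm_some_zero]
  rfl

lemma onTangentLine_some_some_iff {x₀ y₀ x y : R} (h : W.toAffine.Nonsingular x₀ y₀)
    (h' : W.toAffine.Nonsingular x y) :
    OnTangentLine (.some x₀ y₀ h) (.some x y h') ↔
      W.toAffine.polynomialX.evalEval x₀ y₀ * (x - x₀) +
        W.toAffine.polynomialY.evalEval x₀ y₀ * (y - y₀) = 0 := by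
  rw [← tangentForm_some_some_of_equation h.1]
  rfl

lemma onTangentLine_some_zero_iff_Y_eq {x₀ y₀ : R} (h : W.toAffine.Nonsingular x₀ y₀) :
    OnTangentLine (.some x₀ y₀ h) 0 ↔ y₀ = W.toAffine.negY x₀ y₀ := by
  rw [onTangentLine_some_zero_iff, ← Affine.evalEval_polynomialY,
    evalEval_polynomialY_eq_sub_negY, sub_eq_zero]

lemma isInflectionPoint_some_iff {x₀ y₀ : R} (h : W.toAffine.Nonsingular x₀ y₀) :
    IsInflectionPoint (.some x₀ y₀ h) ↔
      ((∀ (x y : R) (h' : W.toAffine.Nonsingular x y),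
          (W.a₁ * y₀ - 3 * x₀ ^ 2 - 2 * W.a₂ * x₀ - W.a₄) * x
            + (2 * y₀ + W.a₁ * x₀ + W.a₃) * y
            + (y₀ ^ 2 + W.a₁ * x₀ * y₀ + 2 * W.a₃ * y₀
                - W.a₂ * x₀ ^ 2 - 2 * W.a₄ * x₀ - 3 * W.a₆) = 0 →
          Affine.Point.some x y h' = Affine.Point.some x₀ y₀ h) ∧
        2 * y₀ + W.a₁ * x₀ + W.a₃ ≠ 0) := by
  simp_rw [← tangentForm_some_some, Ne, ← onTangentLine_some_zero_iff h]
  constructor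
  · intro hP
    exact ⟨fun x y h' => hP (.some x y h'), fun h0 => Affine.Point.some_ne_zero h (hP 0 h0).symm⟩
  · rintro ⟨haffine, hinfinity⟩ (_ | ⟨x, y, h'⟩) hQ
    · exact absurd hQ hinfinity
    · exact haffine x y h' hQ

end CommRing

section Field

variable {F : Type*} [Field F] {W : WeierstrassCurve F}

lemma onTangentLine_zero_iff {Q : W.toAffine.Point} : OnTangentLine 0 Q ↔ Q = 0 := by
  rw [OnTangentLine, Affine.Point.zero_def, homogeneousCoords, tangentForm_zero]
  cases Q <;> simp [homogeneousCoords]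

lemma onTangentLine_some_iff_of_Y_eq {x₀ y₀ : F} (h : W.toAffine.Nonsingular x₀ y₀)
    (hy₀ : y₀ = W.toAffine.negY x₀ y₀) {Q : W.toAffine.Point} :
    OnTangentLine (.some x₀ y₀ h) Q ↔ Q = .some x₀ y₀ h ∨ Q = 0 := by
  rcases Q with _ | ⟨x, y, h'⟩
  · rw [← Affine.Point.zero_def, onTangentLine_some_zero_iff_Y_eq]
    exact iff_of_true hy₀ (.inr rfl)
  have hFY : W.toAffine.polynomialY.evalEval x₀ y₀ = 0 := by
    rw [evalEval_polynomialY_eq_sub_negY, sub_eq_zero, ← hy₀]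
  have hFX : W.toAffine.polynomialX.evalEval x₀ y₀ ≠ 0 := h.2.resolve_right (not_not.mpr hFY)
  have y_eq_of_x_eq (hx : x = x₀) : y = y₀ := by
    simpa only [← hy₀, or_self] using Affine.Y_eq_of_X_eq h'.1 h.1 hx
  simpa [onTangentLine_some_some_iff, hFY, hFX, sub_eq_zero] using y_eq_of_x_eq

variable [DecidableEq F]

lemma onTangentLine_some_some_iff_of_Y_ne {x₀ y₀ x y : F} (h : W.toAffine.Nonsingular x₀ y₀)
    (h' : W.toAffine.Nonsingular x y) (hy₀ : y₀ ≠ W.toAffine.negY x₀ y₀) :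
    OnTangentLine (.some x₀ y₀ h) (.some x y h') ↔
      y = W.toAffine.slope x₀ x₀ y₀ y₀ * (x - x₀) + y₀ := by
  have hFY : W.toAffine.polynomialY.evalEval x₀ y₀ ≠ 0 := by
    rwa [evalEval_polynomialY_eq_sub_negY, sub_ne_zero]
  rw [onTangentLine_some_some_iff, Affine.slope_of_Y_ne_eq_evalEval rfl hy₀, ← sub_eq_iff_eq_add,
    div_mul_eq_mul_div, eq_div_iff hFY]
  constructor <;> intro hline <;> linear_combination hline

lemma equation_on_tangent_iff {x₀ y₀ : F} (h : W.toAffine.Equation x₀ y₀)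
    (hy₀ : y₀ ≠ W.toAffine.negY x₀ y₀) {x : F} :
    W.toAffine.Equation x (W.toAffine.slope x₀ x₀ y₀ y₀ * (x - x₀) + y₀) ↔
      x = x₀ ∨ x = W.toAffine.addX x₀ x₀ (W.toAffine.slope x₀ x₀ y₀ y₀) := by
  rw [← eval_addPolynomial_eq_zero_iff,
    Affine.addPolynomial_slope h h fun hxy => hy₀ hxy.2]
  simp [sub_eq_zero]

lemma onTangentLine_some_iff_of_Y_ne {x₀ y₀ : F} (h : W.toAffine.Nonsingular x₀ y₀)
    (hy₀ : y₀ ≠ W.toAffine.negY x₀ y₀) {Q : W.toAffine.Point} :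
    OnTangentLine (.some x₀ y₀ h) Q ↔
      Q = .some x₀ y₀ h ∨
        Q = .some _ _ (Affine.nonsingular_negAdd h h fun hxy => hy₀ hxy.2) := by
  rcases Q with _ | ⟨x, y, h'⟩
  · rw [← Affine.Point.zero_def, onTangentLine_some_zero_iff_Y_eq]
    simpa using hy₀
  rw [onTangentLine_some_some_iff_of_Y_ne h h' hy₀, Affine.Point.some.injEq,
    Affine.Point.some.injEq, Affine.negAddY]
  constructor
  · rintro rfl
    rcases (equation_on_tangent_iff h.1 hy₀).mp h'.1 with rfl | rfl
    · exact .inl ⟨rfl, by ring⟩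
    · exact .inr ⟨rfl, rfl⟩
  · rintro (⟨rfl, rfl⟩ | ⟨rfl, rfl⟩) <;> ring

theorem onTangentLine_iff {P Q : W.toAffine.Point} :
    OnTangentLine P Q ↔ Q = P ∨ Q = -(P + P) := by
  rcases P with _ | ⟨x₀, y₀, h⟩
  · rw [← Affine.Point.zero_def, onTangentLine_zero_iff, add_zero, neg_zero, or_self]
  by_cases hy₀ : y₀ = W.toAffine.negY x₀ y₀
  · rw [onTangentLine_some_iff_of_Y_eq h hy₀, Affine.Point.add_self_of_Y_eq hy₀, neg_zero]
  · rw [onTangentLine_some_iff_of_Y_ne h hy₀, Affine.Point.add_self_of_Y_ne' hy₀, neg_neg]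

theorem statement8_general (P : W.toAffine.Point) : 3 • P = 0 ↔ IsInflectionPoint P :=
  calc
    3 • P = 0 ↔ -(P + P) = P := by rw [succ_nsmul, two_nsmul, add_eq_zero_iff_neg_eq]
    _ ↔ IsInflectionPoint P := by simp [IsInflectionPoint, onTangentLine_iff]

end Field

open scoped Classical in
/-- inflection points are exactly the 3-torsion points.  Let `K` be an
algebraically closed field of characteristic ≠ 2, 3 and let `E ⊂ ℙ²` be an elliptic curve given
by a homogeneous Weierstrass cubic `F(X,Y,Z) = 0` with identity `O = [0:1:0]`.  Let
`P = (x₀, y₀)` be an affine point of `E` and let `L` be the tangent line at `P`, whose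
coefficients are the partial derivatives `∂F/∂X`, `∂F/∂Y`, `∂F/∂Z` evaluated at `(x₀, y₀, 1)`.
Then `3·P = O` if and only if `P` is an inflection point, i.e. the only point of `E(K)` lying on
`L` is `P` itself: every affine point on `L` equals `P`, and `O` does not lie on `L` (the
`Y`-coefficient `∂F/∂Y(P) = 2y₀ + a₁x₀ + a₃` is nonzero). -/
theorem statement8 {K : Type*} [Field K] [IsAlgClosed K]
    (h2 : (2 : K) ≠ 0) (h3 : (3 : K) ≠ 0)
    (W : WeierstrassCurve K) (hΔ : W.Δ ≠ 0) (x₀ y₀ : K)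
    (h : W.toAffine.Nonsingular x₀ y₀) :
    3 • (Affine.Point.some x₀ y₀ h) = 0 ↔
      ((∀ (x y : K) (h' : W.toAffine.Nonsingular x y),
          (W.a₁ * y₀ - 3 * x₀ ^ 2 - 2 * W.a₂ * x₀ - W.a₄) * x
            + (2 * y₀ + W.a₁ * x₀ + W.a₃) * y
            + (y₀ ^ 2 + W.a₁ * x₀ * y₀ + 2 * W.a₃ * y₀
                - W.a₂ * x₀ ^ 2 - 2 * W.a₄ * x₀ - 3 * W.a₆) = 0 →
          Affine.Point.some x y h' = Affine.Point.some x₀ y₀ h) ∧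
        2 * y₀ + W.a₁ * x₀ + W.a₃ ≠ 0) := by
  exact (statement8_general _).trans (isInflectionPoint_some_iff h)
end

section
/- Let K be an algebraically closed field with a nontrivial non-archimedean valuation v: K* → ℝ, valuation ring R, and residue field k of characteristic different from 2 and 3. If W and W' are two minimal integral Weierstrass models of the same elliptic curve E over K, related by an admissible change of variables x = u²x' + r, y = u³y' + u²sx' + t, then v(u) = 0 (i.e. u ∈ R*) and r, s, t ∈ R. -/
open WeierstrassCurve

/-!
Minimality of both models forces `v W.Δ = v W'.Δ`, and `W'.Δ = u⁻¹ ^ 12 * W.Δ ≠ 0`, so `v u = 0`.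
Once `u` is integral over a ring `R` containing the coefficients of both models, so are `r`, `s`
and `t`. In the transformation formulas

* `u ^ 6 * b₆' = b₆ + 2 * r * b₄ + r ^ 2 * b₂ + 4 * r ^ 3`,
* `u ^ 8 * b₈' = b₈ + 3 * r * b₆ + 3 * r ^ 2 * b₄ + r ^ 3 * b₂ + 3 * r ^ 4`,

`r` times the first minus the second is a *monic* quartic equation for `r`, because `4 - 3 = 1`.
The formulas for `a₂'` and `a₆'` are then monic quadratic equations for `s` and `t`. A valuation
ring contains every element of its fraction field that is integral over it.
-/

section IntegralEquation

open Polynomial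

theorem isIntegral_of_pow_add_sum_eq_zero {R A : Type*} [CommRing R] [CommRing A] [Algebra R A]
    {n : ℕ} {c : Fin n → A} (hc : ∀ i, IsIntegral R (c i)) {x : A}
    (hx : x ^ n + ∑ i, c i * x ^ (i : ℕ) = 0) : IsIntegral R x := by
  lift c to Fin n → integralClosure R A using hc
  have hmonic : (X ^ n + ∑ i, C (c i) * X ^ (i : ℕ)).Monic := monic_X_pow_add (degree_sum_fin_lt c)
  refine isIntegral_trans (A := integralClosure R A) x ⟨_, hmonic, ?_⟩
  simpa [eval₂_finsetSum] using hx

theorem isIntegral_of_sq_add_mul_add_eq_zero {R A : Type*} [CommRing R] [CommRing A] [Algebra R A]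
    {b c : A} (hb : IsIntegral R b) (hc : IsIntegral R c) {x : A} (hx : x ^ 2 + b * x + c = 0) :
    IsIntegral R x := by
  refine isIntegral_of_pow_add_sum_eq_zero (c := ![c, b]) (Fin.forall_fin_two.2 ⟨hc, hb⟩) ?_
  simp only [Fin.sum_univ_two, Matrix.cons_val, Fin.coe_ofNat_eq_mod]
  linear_combination hx

end IntegralEquation

section VariableChange

theorem variableChange_r_quartic_eq_zero {A : Type*} [CommRing A] (W : WeierstrassCurve A)
    (C : VariableChange A) :
    C.r ^ 4 - W.b₄ * C.r ^ 2 - (2 • W.b₆ + C.u ^ 6 * (C • W).b₆) * C.r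
      + (C.u ^ 8 * (C • W).b₈ - W.b₈) = 0 := by
  have hb₆ : C.u ^ 6 * (C • W).b₆ = W.b₆ + 2 * C.r * W.b₄ + C.r ^ 2 * W.b₂ + 4 * C.r ^ 3 := by
    rw [variableChange_b₆, ← mul_assoc, pow_mul_pow_eq_one 6 C.u.mul_inv, one_mul]
  have hb₈ : C.u ^ 8 * (C • W).b₈ =
      W.b₈ + 3 * C.r * W.b₆ + 3 * C.r ^ 2 * W.b₄ + C.r ^ 3 * W.b₂ + 3 * C.r ^ 4 := by
    rw [variableChange_b₈, ← mul_assoc, pow_mul_pow_eq_one 8 C.u.mul_inv, one_mul]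
  linear_combination hb₈ - C.r * hb₆

theorem variableChange_s_quadratic_eq_zero {A : Type*} [CommRing A] (W : WeierstrassCurve A)
    (C : VariableChange A) :
    C.s ^ 2 + W.a₁ * C.s + (C.u ^ 2 * (C • W).a₂ - W.a₂ - 3 • C.r) = 0 := by
  rw [variableChange_a₂, ← mul_assoc, pow_mul_pow_eq_one 2 C.u.mul_inv]
  ring

theorem variableChange_t_quadratic_eq_zero {A : Type*} [CommRing A] (W : WeierstrassCurve A)
    (C : VariableChange A) :
    C.t ^ 2 + (W.a₃ + C.r * W.a₁) * C.t
      + (C.u ^ 6 * (C • W).a₆ - (W.a₆ + C.r * W.a₄ + C.r ^ 2 * W.a₂ + C.r ^ 3)) = 0 := by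
  rw [variableChange_a₆, ← mul_assoc, pow_mul_pow_eq_one 6 C.u.mul_inv]
  ring

variable {R K : Type*} [CommRing R] [Field K] [Algebra R K] {W : WeierstrassCurve K}
  {C : VariableChange K}

theorem isIntegral_variableChange_r (hW : W.IsIntegral R) (hCW : (C • W).IsIntegral R)
    (hu : IsIntegral R (C.u : K)) : IsIntegral R C.r := by
  have hb₄ : IsIntegral R W.b₄ := integralModel_b₄_eq R W ▸ isIntegral_algebraMap
  have hb₆ : IsIntegral R W.b₆ := integralModel_b₆_eq R W ▸ isIntegral_algebraMap
  have hb₈ : IsIntegral R W.b₈ := integralModel_b₈_eq R W ▸ isIntegral_algebraMap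
  have hb₆' : IsIntegral R (C • W).b₆ := integralModel_b₆_eq R (C • W) ▸ isIntegral_algebraMap
  have hb₈' : IsIntegral R (C • W).b₈ := integralModel_b₈_eq R (C • W) ▸ isIntegral_algebraMap
  refine isIntegral_of_pow_add_sum_eq_zero (c := ![C.u ^ 8 * (C • W).b₈ - W.b₈,
    -(2 • W.b₆ + C.u ^ 6 * (C • W).b₆), -W.b₄, 0]) (fun i ↦ ?_) ?_
  · fin_cases i
    · exact ((hu.pow 8).mul hb₈').sub hb₈
    · exact ((hb₆.nsmul 2).add ((hu.pow 6).mul hb₆')).neg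
    · exact hb₄.neg
    · exact isIntegral_zero
  · simp only [Fin.sum_univ_four, Matrix.cons_val, Fin.coe_ofNat_eq_mod]
    linear_combination variableChange_r_quartic_eq_zero W C

theorem isIntegral_variableChange_s (hW : W.IsIntegral R) (hCW : (C • W).IsIntegral R)
    (hu : IsIntegral R (C.u : K)) : IsIntegral R C.s := by
  have hr : IsIntegral R C.r := isIntegral_variableChange_r hW hCW hu
  have ha₁ : IsIntegral R W.a₁ := integralModel_a₁_eq R W ▸ isIntegral_algebraMap
  have ha₂ : IsIntegral R W.a₂ := integralModel_a₂_eq R W ▸ isIntegral_algebraMap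
  have ha₂' : IsIntegral R (C • W).a₂ := integralModel_a₂_eq R (C • W) ▸ isIntegral_algebraMap
  have hc₀ := (((hu.pow 2).mul ha₂').sub ha₂).sub (hr.nsmul 3)
  exact isIntegral_of_sq_add_mul_add_eq_zero ha₁ hc₀ (variableChange_s_quadratic_eq_zero W C)

theorem isIntegral_variableChange_t (hW : W.IsIntegral R) (hCW : (C • W).IsIntegral R)
    (hu : IsIntegral R (C.u : K)) : IsIntegral R C.t := by
  have hr : IsIntegral R C.r := isIntegral_variableChange_r hW hCW hu
  have ha₁ : IsIntegral R W.a₁ := integralModel_a₁_eq R W ▸ isIntegral_algebraMap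
  have ha₂ : IsIntegral R W.a₂ := integralModel_a₂_eq R W ▸ isIntegral_algebraMap
  have ha₃ : IsIntegral R W.a₃ := integralModel_a₃_eq R W ▸ isIntegral_algebraMap
  have ha₄ : IsIntegral R W.a₄ := integralModel_a₄_eq R W ▸ isIntegral_algebraMap
  have ha₆ : IsIntegral R W.a₆ := integralModel_a₆_eq R W ▸ isIntegral_algebraMap
  have ha₆' : IsIntegral R (C • W).a₆ := integralModel_a₆_eq R (C • W) ▸ isIntegral_algebraMap
  have hc₀ := ((hu.pow 6).mul ha₆').sub
    (((ha₆.add (hr.mul ha₄)).add ((hr.pow 2).mul ha₂)).add (hr.pow 3))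
  exact isIntegral_of_sq_add_mul_add_eq_zero (ha₃.add (hr.mul ha₁)) hc₀
    (variableChange_t_quadratic_eq_zero W C)

end VariableChange

section Valuation

variable {K : Type*} [Field K]

theorem isIntegral_integer_iff_nonneg {Γ : Type*} [LinearOrderedAddCommGroupWithTop Γ]
    (v : AddValuation K Γ) {x : K} : IsIntegral v.toValuation.integer x ↔ 0 ≤ v x :=
  (Valuation.integer.integers v.toValuation).isIntegral_iff_v_le_one

theorem valuation_variableChange_u_eq_one {Γ₀ : Type*} [LinearOrderedCommGroupWithZero Γ₀]
    {v : Valuation K Γ₀} {W : WeierstrassCurve K} {C : VariableChange K} (hW : W.Δ ≠ 0)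
    (hΔ : v W.Δ = v (C • W).Δ) : v (C.u : K) = 1 := by
  have hu_pow : v (C.u : K) ^ 12 * v W.Δ = v W.Δ := by
    nth_rw 1 [hΔ]
    rw [← map_pow, ← map_mul, variableChange_Δ, ← mul_assoc,
      pow_mul_pow_eq_one 12 C.u.mul_inv, one_mul]
  exact (pow_eq_one_iff_of_nonneg zero_le (by norm_num)).1
    ((mul_eq_right₀ (v.ne_zero_iff.2 hW)).1 hu_pow)

end Valuation

section Model

variable {K : Type*} [Field K] {v : AddValuation K (WithTop ℝ)} {E W W' : WeierstrassCurve K}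

theorem IsIntegralModel.isIntegral (hW : IsIntegralModel v W) :
    W.IsIntegral v.toValuation.integer := by
  obtain ⟨h₁, h₂, h₃, h₄, h₆⟩ := hW
  exact isIntegral_of_exists_lift _ ⟨⟨_, h₁⟩, rfl⟩ ⟨⟨_, h₂⟩, rfl⟩ ⟨⟨_, h₃⟩, rfl⟩
    ⟨⟨_, h₄⟩, rfl⟩ ⟨⟨_, h₆⟩, rfl⟩

theorem IsModelOf.Δ_ne_zero (hW : IsModelOf E W) (hΔ : E.Δ ≠ 0) : W.Δ ≠ 0 := by
  obtain ⟨C, rfl⟩ := hW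
  rw [variableChange_Δ]
  exact mul_ne_zero (pow_ne_zero _ C.u⁻¹.ne_zero) hΔ

theorem IsMinimalModel.map_Δ_eq (hW : IsMinimalModel v E W) (hW' : IsMinimalModel v E W') :
    v W.Δ = v W'.Δ :=
  le_antisymm (hW.2.2 W' hW'.1 hW'.2.1) (hW'.2.2 W hW.1 hW.2.1)

end Model

theorem statement11_general {K : Type*} [Field K] (v : AddValuation K (WithTop ℝ))
    (E W W' : WeierstrassCurve K) (hΔ : E.Δ ≠ 0)
    (hW : IsMinimalModel v E W) (hW' : IsMinimalModel v E W')
    (C : VariableChange K) (hC : W' = C • W) :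
    v (C.u : K) = 0 ∧ 0 ≤ v C.r ∧ 0 ≤ v C.s ∧ 0 ≤ v C.t := by
  subst hC
  have hW_int := hW.2.1.isIntegral
  have hCW_int := hW'.2.1.isIntegral
  -- The value group of `v.toValuation` is multiplicative: its `1` is `0 : WithTop ℝ`.
  have hu : v (C.u : K) = 0 :=
    valuation_variableChange_u_eq_one (v := v.toValuation) (hW.1.Δ_ne_zero hΔ) (hW.map_Δ_eq hW')
  have hu_int : IsIntegral v.toValuation.integer (C.u : K) :=
    (isIntegral_integer_iff_nonneg v).2 hu.ge
  simp only [← isIntegral_integer_iff_nonneg]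
  exact ⟨hu, isIntegral_variableChange_r hW_int hCW_int hu_int,
    isIntegral_variableChange_s hW_int hCW_int hu_int,
    isIntegral_variableChange_t hW_int hCW_int hu_int⟩

/-- uniqueness of minimal models. If `W` and `W'` are two minimal integral
Weierstrass models of the same elliptic curve `E` over `K`, related by an admissible change of
variables `C = (u, r, s, t)`, then `v u = 0` (i.e. `u ∈ Rˣ`) and `r, s, t ∈ R`. -/
theorem statement11 {K : Type*} [Field K] [IsAlgClosed K] (v : AddValuation K (WithTop ℝ))
    (hv : ∃ x : K, x ≠ 0 ∧ v x ≠ 0) (hv2 : v (2 : K) = 0) (hv3 : v (3 : K) = 0)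
    (E W W' : WeierstrassCurve K) (hΔ : E.Δ ≠ 0)
    (hW : IsMinimalModel v E W) (hW' : IsMinimalModel v E W')
    (C : VariableChange K) (hC : W' = C • W) :
    v (C.u : K) = 0 ∧ 0 ≤ v C.r ∧ 0 ≤ v C.s ∧ 0 ≤ v C.t :=
  statement11_general v E W W' hΔ hW hW' C hC
end

section
/- Let K be an algebraically closed field with a nontrivial non-archimedean valuation v: K* → ℝ and residue field k of characteristic different from 2 and 3. Let W be an integral Weierstrass model of an elliptic curve E over K with min{v(c₄), v(c₆)} = 0 (i.e. W is minimal). Then v(Δ) = 0 if and only if v(j) ≥ 0, where j = c₄³/Δ is the j-invariant; that is, E has good reduction if and only if v(j(E)) ≥ 0. -/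
open WeierstrassCurve

/-! Since `1728 Δ = c₄³ - c₆²` and `v 1728 ≥ 0`, if `v Δ > 0` and `v c₄ > 0`, then `v c₆ > 0`.
So `min (v c₄) (v c₆) = 0` and `v Δ > 0` force `v c₄ = 0`, whence `v (c₄³ / Δ) = -v Δ < 0`. -/

section Valuation

variable {Γ₀ : Type*}

theorem map_natCast_nonneg {R : Type*} [Ring R] [LinearOrderedAddCommMonoidWithTop Γ₀]
    (v : AddValuation R Γ₀) (n : ℕ) : 0 ≤ v (n : R) := by
  induction n with
  | zero => rw [Nat.cast_zero, v.map_zero]; exact le_top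
  | succ n ih => rw [Nat.cast_succ]; exact v.map_le_add ih v.map_one.ge

theorem map_div_nonneg_iff {K : Type*} [DivisionRing K] [LinearOrderedAddCommGroupWithTop Γ₀]
    (v : AddValuation K Γ₀) {x y : K} (hy : y ≠ 0) : 0 ≤ v (x / y) ↔ v y ≤ v x := by
  have hvy : v y ≠ ⊤ := v.ne_top_iff.mpr hy
  rw [v.map_div, ← LinearOrderedAddCommGroupWithTop.sub_self_eq_zero_of_ne_top hvy]
  exact LinearOrderedAddCommGroupWithTop.sub_le_sub_iff_left_of_ne_top hvy

end Valuation

section Discriminant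

variable {R : Type*} [CommRing R]

theorem Δ_mem_of_coeffs_mem (S : Subring R) (W : WeierstrassCurve R) (h₁ : W.a₁ ∈ S)
    (h₂ : W.a₂ ∈ S) (h₃ : W.a₃ ∈ S) (h₄ : W.a₄ ∈ S) (h₆ : W.a₆ ∈ S) : W.Δ ∈ S := by
  let W₀ : WeierstrassCurve S := ⟨⟨_, h₁⟩, ⟨_, h₂⟩, ⟨_, h₃⟩, ⟨_, h₄⟩, ⟨_, h₆⟩⟩
  have hΔ : W.Δ = S.subtype W₀.Δ := W₀.map_Δ S.subtype
  exact hΔ ▸ W₀.Δ.2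

theorem IsIntegralModel.map_Δ_nonneg {K : Type*} [Field K] {v : AddValuation K (WithTop ℝ)}
    {W : WeierstrassCurve K} (h : IsIntegralModel v W) : 0 ≤ v W.Δ := by
  obtain ⟨h₁, h₂, h₃, h₄, h₆⟩ := h
  -- `toValuation` reverses the order, so `x ∈ integer` unfolds to `0 ≤ v x`.
  exact Δ_mem_of_coeffs_mem (AddValuation.toValuation v).integer W h₁ h₂ h₃ h₄ h₆

variable {Γ₀ : Type*} [LinearOrderedAddCommMonoidWithTop Γ₀] (v : AddValuation R Γ₀)
  (W : WeierstrassCurve R)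

theorem map_c₆_pos_of_map_Δ_pos_of_map_c₄_pos (hΔ : 0 < v W.Δ) (hc₄ : 0 < v W.c₄) :
    0 < v W.c₆ := by
  have hmul_Δ : 0 < v (-(1728 * W.Δ)) := by
    rw [v.map_neg, v.map_mul]
    exact hΔ.trans_le (le_add_of_nonneg_left (mod_cast map_natCast_nonneg v 1728))
  have hc₄_cube : 0 < v (W.c₄ ^ 3) := by
    rw [v.map_pow]
    exact nsmul_pos hc₄ three_ne_zero
  have hc₆_sq : 0 < v (W.c₆ ^ 2) := by
    have c₆_sq_eq : W.c₆ ^ 2 = W.c₄ ^ 3 + -(1728 * W.Δ) := by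
      linear_combination W.c_relation
    rw [c₆_sq_eq]
    exact v.map_lt_add hc₄_cube hmul_Δ
  rw [v.map_pow] at hc₆_sq
  exact (nsmul_pos_iff two_ne_zero).mp hc₆_sq

theorem map_Δ_eq_zero_iff_le_map_c₄_pow (hΔ : 0 ≤ v W.Δ) (hmin : min (v W.c₄) (v W.c₆) = 0) :
    v W.Δ = 0 ↔ v W.Δ ≤ v (W.c₄ ^ 3) := by
  rw [v.map_pow]
  constructor
  · intro hΔ_zero
    have hc₄ : 0 ≤ v W.c₄ := hmin.ge.trans (min_le_left _ _)
    exact hΔ_zero.le.trans (nsmul_nonneg hc₄ 3)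
  · intro hle
    by_contra hΔ_ne
    have hΔ_pos : 0 < v W.Δ := hΔ.lt_of_ne' hΔ_ne
    have hc₄ : 0 < v W.c₄ := (nsmul_pos_iff three_ne_zero).mp (hΔ_pos.trans_le hle)
    exact (lt_min hc₄ (map_c₆_pos_of_map_Δ_pos_of_map_c₄_pos v W hΔ_pos hc₄)).ne' hmin

end Discriminant

theorem statement15_general {K Γ₀ : Type*} [Field K] [LinearOrderedAddCommGroupWithTop Γ₀]
    (v : AddValuation K Γ₀) (W : WeierstrassCurve K) (hΔ : W.Δ ≠ 0) (hvΔ : 0 ≤ v W.Δ)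
    (hmin : min (v W.c₄) (v W.c₆) = 0) : v W.Δ = 0 ↔ 0 ≤ v (W.c₄ ^ 3 / W.Δ) := by
  rw [map_div_nonneg_iff v hΔ]
  exact map_Δ_eq_zero_iff_le_map_c₄_pow v W hvΔ hmin

/-- good reduction and the j-invariant. Let `W` be a minimal integral
Weierstrass model (i.e. `min (v c₄) (v c₆) = 0`) of an elliptic curve `E` over `K`.  Then
`v Δ = 0` if and only if `v j ≥ 0`, where `j = c₄³/Δ`; that is, `E` has good reduction if
and only if `v (j E) ≥ 0`. -/
theorem statement15 {K : Type*} [Field K] [IsAlgClosed K] (v : AddValuation K (WithTop ℝ))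
    (hv : ∃ x : K, x ≠ 0 ∧ v x ≠ 0) (hv2 : v (2 : K) = 0) (hv3 : v (3 : K) = 0)
    (W : WeierstrassCurve K) (hΔ : W.Δ ≠ 0)
    (hint : IsIntegralModel v W) (hmin : min (v W.c₄) (v W.c₆) = 0) :
    v W.Δ = 0 ↔ 0 ≤ v (W.c₄ ^ 3 / W.Δ) :=
  statement15_general v W hΔ hint.map_Δ_nonneg hmin
end

section
/- Let K be an algebraically closed field with a nontrivial non-archimedean valuation v: K* → ℝ, valuation ring R, and residue field k. Let E be an elliptic curve over K given by an integral Weierstrass model, and let n be a positive integer not divisible by the characteristic of k. If P = (x, y) ∈ E(K) is an affine point with n·P = O, then v(x) ≥ 0 and v(y) ≥ 0; equivalently, the kernel E₁(K) of the reduction map (the points reducing to the point at infinity) contains no nontrivial n-torsion: E₁(K)[n] = 0. -/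
open WeierstrassCurve

/-!
Suppose `x` is not integral. Then `π = -x/y` lies in the maximal ideal, and the substitution
`(x, y) ↦ (π²x, π³y)` replaces the integral model by one with coefficients `πⁱaᵢ`, whose reduction
is the cuspidal cubic `w = z³` in the coordinates `z = -x/y`, `w = -1/y`. The point `P` becomes a
point with `z = 1`. Points with integral `z` and `w` reduce to nonsingular points of the cuspidal
cubic, which form the additive group of the residue field with coordinate `z`; so `n • P` has
`z ≡ n`, and `n • P = 0` is impossible when `n` is a unit.
-/

namespace WeierstrassVariableChange

variable {F : Type*} [Field F] (C : VariableChange F) (W : WeierstrassCurve F)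

/-- The `x`-coordinate on `W` of a point of `C • W` with `x`-coordinate `x`. -/
def mapX (x : F) : F := C.u ^ 2 * x + C.r

/-- The `y`-coordinate on `W` of the point `(x, y)` of `C • W`. -/
def mapY (x y : F) : F := C.u ^ 3 * y + C.u ^ 2 * C.s * x + C.t

variable {C} in
lemma mapX_inj {x₁ x₂ : F} : mapX C x₁ = mapX C x₂ ↔ x₁ = x₂ := by
  simp [mapX]

variable {C} in
lemma mapY_inj {x y₁ y₂ : F} : mapY C x y₁ = mapY C x y₂ ↔ y₁ = y₂ := by
  simp [mapY]

lemma equation_smul_iff (x y : F) :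
    (C • W).toAffine.Equation x y ↔ W.toAffine.Equation (mapX C x) (mapY C x y) := by
  rw [Affine.equation_iff', Affine.equation_iff',
    ← mul_eq_zero_iff_left (pow_ne_zero 6 C.u.ne_zero)]
  simp only [variableChange_def, mapX, mapY, Units.val_inv_eq_inv_val]
  congr! 1
  field_simp
  ring

lemma nonsingular_smul_iff (x y : F) :
    (C • W).toAffine.Nonsingular x y ↔ W.toAffine.Nonsingular (mapX C x) (mapY C x y) := by
  rw [Affine.nonsingular_iff', Affine.nonsingular_iff', equation_smul_iff]
  refine and_congr_right fun _ => ?_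
  rw [← not_iff_not]
  push Not
  simp only [variableChange_def, mapX, mapY, Units.val_inv_eq_inv_val]
  field_simp
  constructor <;> rintro ⟨hX, hY⟩
  · exact ⟨by linear_combination hX - C.s * hY, by linear_combination hY⟩
  · exact ⟨by linear_combination hX + C.s * hY, by linear_combination hY⟩

lemma negY_mapY (x y : F) :
    W.toAffine.negY (mapX C x) (mapY C x y) = mapY C x ((C • W).toAffine.negY x y) := by
  simp only [Affine.negY, variableChange_def, mapX, mapY, Units.val_inv_eq_inv_val]
  field_simp
  ring

lemma addX_mapX (x₁ x₂ ℓ : F) :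
    W.toAffine.addX (mapX C x₁) (mapX C x₂) (C.u * ℓ + C.s) =
      mapX C ((C • W).toAffine.addX x₁ x₂ ℓ) := by
  simp only [Affine.addX, variableChange_def, mapX, Units.val_inv_eq_inv_val]
  field_simp
  ring

lemma addY_mapY (x₁ x₂ y₁ ℓ : F) :
    W.toAffine.addY (mapX C x₁) (mapX C x₂) (mapY C x₁ y₁) (C.u * ℓ + C.s) =
      mapY C ((C • W).toAffine.addX x₁ x₂ ℓ) ((C • W).toAffine.addY x₁ x₂ y₁ ℓ) := by
  rw [Affine.addY, Affine.addY, ← negY_mapY, ← addX_mapX, Affine.negAddY, Affine.negAddY, addX_mapX]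
  congr 1
  simp only [mapX, mapY]
  ring

variable [DecidableEq F]

variable {W} in
lemma slope_map {x₁ x₂ y₁ y₂ : F} (h₁ : (C • W).toAffine.Equation x₁ y₁)
    (h₂ : (C • W).toAffine.Equation x₂ y₂) (h : ¬(x₁ = x₂ ∧ y₁ = (C • W).toAffine.negY x₂ y₂)) :
    W.toAffine.slope (mapX C x₁) (mapX C x₂) (mapY C x₁ y₁) (mapY C x₂ y₂) =
      C.u * (C • W).toAffine.slope x₁ x₂ y₁ y₂ + C.s := by
  by_cases hx : x₁ = x₂
  · subst hx
    have hy : y₁ ≠ (C • W).toAffine.negY x₁ y₂ := fun hy => h ⟨rfl, hy⟩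
    rw [Affine.slope_of_Y_ne rfl hy,
      Affine.slope_of_Y_ne rfl (by rwa [negY_mapY, Ne, mapY_inj])]
    set d := y₁ - (C • W).toAffine.negY x₁ y₁ with hd
    have hd0 : d ≠ 0 := by
      rw [← Affine.Y_eq_of_Y_ne h₁ h₂ rfl hy] at hy
      exact sub_ne_zero.mpr hy
    have hden : mapY C x₁ y₁ - W.toAffine.negY (mapX C x₁) (mapY C x₁ y₁) = C.u ^ 3 * d := by
      rw [negY_mapY, mapY, mapY, hd]
      ring
    rw [hden]
    field_simp
    simp only [hd, Affine.negY, variableChange_def, mapX, mapY, Units.val_inv_eq_inv_val]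
    field_simp
    ring
  · rw [Affine.slope_of_X_ne hx, Affine.slope_of_X_ne (by rwa [Ne, mapX_inj])]
    have : x₁ - x₂ ≠ 0 := sub_ne_zero.mpr hx
    rw [show mapX C x₁ - mapX C x₂ = C.u ^ 2 * (x₁ - x₂) by rw [mapX, mapX]; ring]
    simp only [mapY]
    field_simp
    ring

variable {C W} in
/-- The group homomorphism `(C • W)(F) → W(F)`, `(x, y) ↦ (u²x + r, u³y + u²sx + t)`. -/
def pointHom : (C • W).toAffine.Point →+ W.toAffine.Point where
  toFun
    | 0 => 0
    | .some x y h => .some (mapX C x) (mapY C x y) ((nonsingular_smul_iff ..).mp h)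
  map_zero' := rfl
  map_add' := by
    rintro (_ | ⟨x₁, y₁, h₁⟩) (_ | ⟨x₂, y₂, h₂⟩)
    any_goals rfl
    by_cases h : x₁ = x₂ ∧ y₁ = (C • W).toAffine.negY x₂ y₂
    · rw [Affine.Point.add_of_Y_eq h.1 h.2]
      refine (Affine.Point.add_of_Y_eq ?_ ?_).symm
      · rw [h.1]
      · rw [negY_mapY, h.1, h.2]
    · have h' : ¬(mapX C x₁ = mapX C x₂ ∧
          mapY C x₁ y₁ = W.toAffine.negY (mapX C x₂) (mapY C x₂ y₂)) := by
        rintro ⟨hx, hy⟩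
        obtain rfl := mapX_inj.mp hx
        exact h ⟨rfl, mapY_inj.mp (hy.trans (negY_mapY ..))⟩
      rw [Affine.Point.add_some h]
      refine Eq.trans ?_ (Affine.Point.add_some h').symm
      simp only [slope_map C h₁.1 h₂.1 h, addX_mapX, addY_mapY]

lemma pointHom_injective :
    Function.Injective (pointHom : (C • W).toAffine.Point →+ W.toAffine.Point) := by
  refine (injective_iff_map_eq_zero _).mpr ?_
  rintro (_ | ⟨x, y, h⟩) hP
  · rfl
  · exact absurd hP (Affine.Point.some_ne_zero _)

end WeierstrassVariableChange

namespace WeierstrassInfinity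

section CommRing

variable {R : Type*} [CommRing R] (W : WeierstrassCurve R)

/-- The Weierstrass equation in the coordinates `z = -x/y`, `w = -1/y` at the point at infinity,
which becomes the origin `(z, w) = (0, 0)`. -/
def ZWEquation (z w : R) : Prop :=
  w = z ^ 3 + W.a₁ * z * w + W.a₂ * z ^ 2 * w + W.a₃ * w ^ 2 + W.a₄ * z * w ^ 2 + W.a₆ * w ^ 3

/-- The numerator of the slope `(w₁ - w₂) / (z₁ - z₂)` of a chord of the curve `ZWEquation W`,
in a form that also gives the slope of the tangent when the two points coincide. -/
def chordNum (z₁ z₂ w₂ : R) : R :=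
  z₁ ^ 2 + z₁ * z₂ + z₂ ^ 2 + W.a₁ * w₂ + W.a₂ * (z₁ + z₂) * w₂ + W.a₄ * w₂ ^ 2

/-- The denominator belonging to `chordNum`; it is `1` at the origin. -/
def chordDen (z₁ w₁ w₂ : R) : R :=
  1 - W.a₁ * z₁ - W.a₂ * z₁ ^ 2 - W.a₃ * (w₁ + w₂) - W.a₄ * z₁ * (w₁ + w₂)
    - W.a₆ * (w₁ ^ 2 + w₁ * w₂ + w₂ ^ 2)

/-- The coefficient of `z³` in `ZWEquation W` restricted to the line `w = ℓz + ν`. -/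
def lineCoeffCube (ℓ : R) : R :=
  1 + W.a₂ * ℓ + W.a₄ * ℓ ^ 2 + W.a₆ * ℓ ^ 3

/-- The coefficient of `z²` in `ZWEquation W` restricted to the line `w = ℓz + ν`. -/
def lineCoeffSq (ℓ ν : R) : R :=
  W.a₁ * ℓ + W.a₂ * ν + W.a₃ * ℓ ^ 2 + 2 * W.a₄ * ℓ * ν + 3 * W.a₆ * ℓ ^ 2 * ν

/-- The coefficient of `z` in `ZWEquation W` restricted to the line `w = ℓz + ν`. -/
def lineCoeffLin (ℓ ν : R) : R :=
  W.a₁ * ν + 2 * W.a₃ * ℓ * ν + W.a₄ * ν ^ 2 + 3 * W.a₆ * ℓ * ν ^ 2 - ℓ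

/-- The constant coefficient of `ZWEquation W` restricted to the line `w = ℓz + ν`. -/
def lineCoeffConst (ν : R) : R :=
  W.a₃ * ν ^ 2 + W.a₆ * ν ^ 3 - ν

variable {W} {z₁ z₂ z₃ w₁ w₂ w₃ ℓ ν : R}

lemma sub_mul_chordDen (h₁ : ZWEquation W z₁ w₁) (h₂ : ZWEquation W z₂ w₂) :
    (w₁ - w₂) * chordDen W z₁ w₁ w₂ = (z₁ - z₂) * chordNum W z₁ z₂ w₂ := by
  rw [ZWEquation] at h₁ h₂
  rw [chordDen, chordNum]
  linear_combination h₁ - h₂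

lemma vieta_of_line (h₁ : ZWEquation W z₁ (ℓ * z₁ + ν))
    (hℓ : ℓ * chordDen W z₁ (ℓ * z₁ + ν) (ℓ * z₂ + ν) = chordNum W z₁ z₂ (ℓ * z₂ + ν))
    (h₃ : lineCoeffCube W ℓ * (z₁ + z₂ + z₃) = -lineCoeffSq W ℓ ν) :
    lineCoeffCube W ℓ * (z₁ * z₂ + z₁ * z₃ + z₂ * z₃) = lineCoeffLin W ℓ ν ∧
      lineCoeffCube W ℓ * (z₁ * z₂ * z₃) = -lineCoeffConst W ν := by
  have root₁ : lineCoeffCube W ℓ * z₁ ^ 3 + lineCoeffSq W ℓ ν * z₁ ^ 2 + lineCoeffLin W ℓ ν * z₁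
      + lineCoeffConst W ν = 0 := by
    rw [ZWEquation] at h₁
    rw [lineCoeffCube, lineCoeffSq, lineCoeffLin, lineCoeffConst]
    linear_combination -h₁
  have quotient_root₂ : lineCoeffCube W ℓ * (z₁ ^ 2 + z₁ * z₂ + z₂ ^ 2)
      + lineCoeffSq W ℓ ν * (z₁ + z₂) + lineCoeffLin W ℓ ν = 0 := by
    rw [chordDen, chordNum] at hℓ
    rw [lineCoeffCube, lineCoeffSq, lineCoeffLin]
    linear_combination -hℓ
  exact ⟨by linear_combination (z₁ + z₂) * h₃ - quotient_root₂,
    by linear_combination z₁ * z₂ * h₃ - z₁ * quotient_root₂ + root₁⟩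

/-- The relation `x₁ + x₂ + x₃ = λ² + a₁λ - a₂` between the `x`-coordinates `xᵢ = zᵢ / wᵢ` of three
points on a line of slope `λ = ℓ / ν`, with denominators cleared by `∏ wᵢ = ν³ / lineCoeffCube`. -/
lemma collinear_relation (h₁ : ZWEquation W z₁ w₁)
    (hℓ : ℓ * chordDen W z₁ w₁ w₂ = chordNum W z₁ z₂ w₂)
    (hw₁ : w₁ = ℓ * z₁ + ν) (hw₂ : w₂ = ℓ * z₂ + ν) (hw₃ : w₃ = ℓ * z₃ + ν)
    (h₃ : lineCoeffCube W ℓ * (z₁ + z₂ + z₃) = -lineCoeffSq W ℓ ν) :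
    lineCoeffCube W ℓ * (w₁ * w₂ * w₃) = ν ^ 3 ∧
    lineCoeffCube W ℓ * (z₁ * w₂ * w₃ + z₂ * w₁ * w₃ + z₃ * w₁ * w₂) =
      ν * (ℓ ^ 2 + W.a₁ * ℓ * ν - W.a₂ * ν ^ 2) := by
  subst hw₁ hw₂ hw₃
  obtain ⟨e₂, e₃⟩ := vieta_of_line h₁ hℓ h₃
  have hprod : lineCoeffCube W ℓ * ν ^ 3 - lineCoeffSq W ℓ ν * ℓ * ν ^ 2
      + lineCoeffLin W ℓ ν * ℓ ^ 2 * ν - lineCoeffConst W ν * ℓ ^ 3 = ν ^ 3 := by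
    rw [lineCoeffCube, lineCoeffSq, lineCoeffLin, lineCoeffConst]
    ring
  have hsum : -3 * ℓ ^ 2 * lineCoeffConst W ν + 2 * ℓ * ν * lineCoeffLin W ℓ ν
      - ν ^ 2 * lineCoeffSq W ℓ ν = ν * (ℓ ^ 2 + W.a₁ * ℓ * ν - W.a₂ * ν ^ 2) := by
    rw [lineCoeffSq, lineCoeffLin, lineCoeffConst]
    ring
  exact ⟨by linear_combination ℓ ^ 3 * e₃ + ℓ ^ 2 * ν * e₂ + ℓ * ν ^ 2 * h₃ + hprod,
    by linear_combination 3 * ℓ ^ 2 * e₃ + 2 * ℓ * ν * e₂ + ν ^ 2 * h₃ + hsum⟩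

end CommRing

section Field

variable {F : Type*} [Field F] {W : WeierstrassCurve F}

/-- `P` has coordinates `(z, w) = (-x/y, -1/y)`. No affine point with `y = 0` has such
coordinates; the point at infinity has coordinates `(0, 0)`. -/
def HasZW : W.toAffine.Point → F → F → Prop
  | .zero, z, w => z = 0 ∧ w = 0
  | .some x y _, z, w => x * w = z ∧ y * w = -1

lemma HasZW.z_unique {P : W.toAffine.Point} {z z' w w' : F} (h : HasZW P z w) (h' : HasZW P z' w') :
    z = z' := by
  match P, h, h' with
  | .zero, ⟨hz, _⟩, ⟨hz', _⟩ => rw [hz, hz']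
  | .some x y _, ⟨hz, hw⟩, ⟨hz', hw'⟩ =>
    have hww' : w = w' := by linear_combination w * hw' - w' * hw
    rw [← hz, ← hz', hww']

lemma zwEquation_of_equation {x y w : F} (h : W.toAffine.Equation x y) (hw : y * w = -1) :
    ZWEquation W (x * w) w := by
  rw [Affine.equation_iff] at h
  rw [ZWEquation]
  linear_combination w ^ 3 * h - (w * (y * w - 1) + W.a₁ * x * w ^ 2 + W.a₃ * w ^ 2) * hw

lemma HasZW.neg {P : W.toAffine.Point} {z w z' w' : F} (h : HasZW P z w)
    (hu : 1 - W.a₁ * z - W.a₃ * w ≠ 0) (hz' : (1 - W.a₁ * z - W.a₃ * w) * z' = -z)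
    (hw' : (1 - W.a₁ * z - W.a₃ * w) * w' = -w) : HasZW (-P) z' w' := by
  match P, h with
  | .zero, ⟨hz, hw⟩ =>
    subst hz hw
    exact ⟨by simpa using hz', by simpa using hw'⟩
  | .some x y _, ⟨hz, hw⟩ =>
    refine ⟨mul_left_cancel₀ hu ?_, mul_left_cancel₀ hu ?_⟩
    · linear_combination x * hw' - hz' - hz
    · rw [Affine.negY]
      linear_combination (-y - W.a₁ * x - W.a₃) * hw' + hw + W.a₁ * hz

lemma sub_eq_mul_sub_of_chord {z₁ z₂ w₁ w₂ ℓ : F} (h₁ : ZWEquation W z₁ w₁)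
    (h₂ : ZWEquation W z₂ w₂) (hD : chordDen W z₁ w₁ w₂ ≠ 0)
    (hℓ : ℓ * chordDen W z₁ w₁ w₂ = chordNum W z₁ z₂ w₂) : w₁ - w₂ = ℓ * (z₁ - z₂) := by
  refine mul_right_cancel₀ hD ?_
  linear_combination sub_mul_chordDen h₁ h₂ - (z₁ - z₂) * hℓ

variable [DecidableEq F] {x₁ x₂ y₁ y₂ w₁ w₂ ℓ : F}

lemma intercept_mul_slope_of_X_ne (hx : x₁ ≠ x₂) (hw₁ : y₁ * w₁ = -1) (hw₂ : y₂ * w₂ = -1)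
    (hℓ : w₁ - w₂ = ℓ * (x₁ * w₁ - x₂ * w₂)) :
    w₁ - ℓ * (x₁ * w₁) ≠ 0 ∧
      (w₁ - ℓ * (x₁ * w₁)) * W.toAffine.slope x₁ x₂ y₁ y₂ = ℓ := by
  have hw₁0 : w₁ ≠ 0 := by rintro rfl; simp at hw₁
  have hw₂0 : w₂ ≠ 0 := by rintro rfl; simp at hw₂
  have hx0 : x₁ - x₂ ≠ 0 := sub_ne_zero.mpr hx
  have hν : (w₁ - ℓ * (x₁ * w₁)) * (x₁ * w₁ - x₂ * w₂) = w₁ * w₂ * (x₁ - x₂) := by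
    linear_combination x₁ * w₁ * hℓ
  refine ⟨fun h => ?_, ?_⟩
  · rw [h, zero_mul] at hν
    exact mul_ne_zero (mul_ne_zero hw₁0 hw₂0) hx0 hν.symm
  · rw [Affine.slope_of_X_ne hx, ← mul_div_assoc, div_eq_iff hx0]
    refine mul_left_cancel₀ (mul_ne_zero hw₁0 hw₂0) ?_
    have hy : w₁ * w₂ * (y₁ - y₂) = ℓ * (x₁ * w₁ - x₂ * w₂) := by
      linear_combination w₂ * hw₁ - w₁ * hw₂ + hℓ
    linear_combination (w₁ - ℓ * (x₁ * w₁)) * hy + ℓ * hν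

lemma intercept_mul_slope_of_Y_ne (h : W.toAffine.Equation x₁ y₁)
    (hy : y₁ ≠ W.toAffine.negY x₁ y₁) (hw : y₁ * w₁ = -1)
    (hD : chordDen W (x₁ * w₁) w₁ w₁ ≠ 0)
    (hℓ : ℓ * chordDen W (x₁ * w₁) w₁ w₁ = chordNum W (x₁ * w₁) (x₁ * w₁) w₁) :
    w₁ - ℓ * (x₁ * w₁) ≠ 0 ∧
      (w₁ - ℓ * (x₁ * w₁)) * W.toAffine.slope x₁ x₁ y₁ y₁ = ℓ := by
  have hw0 : w₁ ≠ 0 := by rintro rfl; simp at hw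
  have hd : y₁ - W.toAffine.negY x₁ y₁ ≠ 0 := sub_ne_zero.mpr hy
  have hden : chordDen W (x₁ * w₁) w₁ w₁ * (w₁ - ℓ * (x₁ * w₁)) =
      w₁ ^ 2 * (y₁ - W.toAffine.negY x₁ y₁) := by
    have hzw := zwEquation_of_equation h hw
    rw [ZWEquation] at hzw
    rw [mul_sub, ← mul_assoc, mul_comm _ ℓ, hℓ, chordDen, chordNum, Affine.negY]
    linear_combination 3 * hzw - 2 * w₁ * hw
  have hnum : w₁ ^ 2 * (3 * x₁ ^ 2 + 2 * W.a₂ * x₁ + W.a₄ - W.a₁ * y₁) =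
      ℓ * chordDen W (x₁ * w₁) w₁ w₁ := by
    rw [hℓ, chordNum]
    linear_combination -W.a₁ * w₁ * hw
  refine ⟨fun hν => ?_, ?_⟩
  · rw [hν, mul_zero] at hden
    exact mul_ne_zero (pow_ne_zero 2 hw0) hd hden.symm
  · rw [Affine.slope_of_Y_ne rfl hy, ← mul_div_assoc, div_eq_iff hd]
    refine mul_left_cancel₀ hD ?_
    linear_combination (3 * x₁ ^ 2 + 2 * W.a₂ * x₁ + W.a₄ - W.a₁ * y₁) * hden
      + (y₁ - W.toAffine.negY x₁ y₁) * hnum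

lemma intercept_mul_slope (h₁ : W.toAffine.Equation x₁ y₁) (h₂ : W.toAffine.Equation x₂ y₂)
    (hw₁ : y₁ * w₁ = -1) (hw₂ : y₂ * w₂ = -1)
    (hne : ¬(x₁ = x₂ ∧ y₁ = W.toAffine.negY x₂ y₂))
    (hD : chordDen W (x₁ * w₁) w₁ w₂ ≠ 0)
    (hℓ : ℓ * chordDen W (x₁ * w₁) w₁ w₂ = chordNum W (x₁ * w₁) (x₂ * w₂) w₂) :
    w₁ - ℓ * (x₁ * w₁) ≠ 0 ∧
      (w₁ - ℓ * (x₁ * w₁)) * W.toAffine.slope x₁ x₂ y₁ y₂ = ℓ := by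
  by_cases hx : x₁ = x₂
  · subst hx
    have hy : y₁ ≠ W.toAffine.negY x₁ y₂ := fun hy => hne ⟨rfl, hy⟩
    obtain rfl : y₁ = y₂ := Affine.Y_eq_of_Y_ne h₁ h₂ rfl hy
    obtain rfl : w₁ = w₂ := by linear_combination w₁ * hw₂ - w₂ * hw₁
    exact intercept_mul_slope_of_Y_ne h₁ hy hw₁ hD hℓ
  · exact intercept_mul_slope_of_X_ne hx hw₁ hw₂ (sub_eq_mul_sub_of_chord
      (zwEquation_of_equation h₁ hw₁) (zwEquation_of_equation h₂ hw₂) hD hℓ)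

lemma HasZW.neg_add {h₁ : W.toAffine.Nonsingular x₁ y₁} {h₂ : W.toAffine.Nonsingular x₂ y₂}
    {z₁ z₂ z₃ w₃ : F} (hP : HasZW (.some x₁ y₁ h₁) z₁ w₁) (hQ : HasZW (.some x₂ y₂ h₂) z₂ w₂)
    (hPQ : ¬(x₁ = x₂ ∧ y₁ = W.toAffine.negY x₂ y₂))
    (hD : chordDen W z₁ w₁ w₂ ≠ 0) (hℓ : ℓ * chordDen W z₁ w₁ w₂ = chordNum W z₁ z₂ w₂)
    (hA : lineCoeffCube W ℓ ≠ 0)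
    (h₃ : lineCoeffCube W ℓ * (z₁ + z₂ + z₃) = -lineCoeffSq W ℓ (w₁ - ℓ * z₁))
    (hw₃ : w₃ = ℓ * z₃ + (w₁ - ℓ * z₁)) :
    HasZW (-(.some x₁ y₁ h₁ + .some x₂ y₂ h₂)) z₃ w₃ := by
  obtain ⟨rfl, hw₁⟩ := hP
  obtain ⟨rfl, hw₂⟩ := hQ
  have hzw₁ := zwEquation_of_equation h₁.1 hw₁
  have hchord := sub_eq_mul_sub_of_chord hzw₁ (zwEquation_of_equation h₂.1 hw₂) hD hℓ
  obtain ⟨hν, hslope⟩ := intercept_mul_slope h₁.1 h₂.1 hw₁ hw₂ hPQ hD hℓ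
  rw [Affine.Point.add_some hPQ]
  set s := W.toAffine.slope x₁ x₂ y₁ y₂
  obtain ⟨ν, hν_def⟩ : ∃ ν, ν = w₁ - ℓ * (x₁ * w₁) := ⟨_, rfl⟩
  rw [← hν_def] at h₃ hν hslope hw₃
  obtain ⟨hprod, hsum⟩ := collinear_relation hzw₁ hℓ (by linear_combination -hν_def)
    (by linear_combination -hν_def - hchord) hw₃ h₃
  have hX : W.toAffine.addX x₁ x₂ s * w₃ = z₃ := by
    have hw₁0 : w₁ ≠ 0 := by rintro rfl; simp at hw₁
    have hw₂0 : w₂ ≠ 0 := by rintro rfl; simp at hw₂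
    refine mul_left_cancel₀ (mul_ne_zero hA (mul_ne_zero hw₁0 hw₂0)) ?_
    rw [Affine.addX]
    linear_combination (s ^ 2 + W.a₁ * s - W.a₂) * hprod - hsum
      + (ν * (ν * s + ℓ) + W.a₁ * ν ^ 2) * hslope
  refine ⟨hX, mul_left_cancel₀ hν ?_⟩
  rw [Affine.addY, Affine.negY_negY, Affine.negAddY]
  have hy₁ : ν * y₁ = ℓ * x₁ - 1 := by
    linear_combination y₁ * hν_def + (1 - ℓ * x₁) * hw₁
  linear_combination (W.toAffine.addX x₁ x₂ s - x₁) * w₃ * hslope + w₃ * hy₁ + ℓ * hX - hw₃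

end Field

section Map

variable {R S : Type*} [CommRing R] [CommRing S] (f : R →+* S) (W : WeierstrassCurve R)

lemma map_chordNum (z₁ z₂ w₂ : R) :
    chordNum (W.map f) (f z₁) (f z₂) (f w₂) = f (chordNum W z₁ z₂ w₂) := by
  simp [chordNum]

lemma map_chordDen (z₁ w₁ w₂ : R) :
    chordDen (W.map f) (f z₁) (f w₁) (f w₂) = f (chordDen W z₁ w₁ w₂) := by
  simp [chordDen]

lemma map_lineCoeffCube (ℓ : R) : lineCoeffCube (W.map f) (f ℓ) = f (lineCoeffCube W ℓ) := by
  simp [lineCoeffCube]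

lemma map_lineCoeffSq (ℓ ν : R) :
    lineCoeffSq (W.map f) (f ℓ) (f ν) = f (lineCoeffSq W ℓ ν) := by
  simp [lineCoeffSq, map_ofNat]

end Map

section CuspidalReduction

variable (R : Type*) {K : Type*} [CommRing R] [IsLocalRing R] [Field K] [Algebra R K]

/-- `V` has a model over the local ring `R` whose reduction is the cuspidal cubic `y² = x³`. -/
def HasCuspidalReduction (V : WeierstrassCurve K) : Prop :=
  ∃ W : WeierstrassCurve R, V = W.map (algebraMap R K) ∧
    W.map (IsLocalRing.residue R) = ⟨0, 0, 0, 0, 0⟩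

variable {R} in
lemma hasCuspidalReduction_smul {W : WeierstrassCurve R} {π : R}
    (hπ : π ∈ IsLocalRing.maximalIdeal R) {u : Kˣ} (hu : (u⁻¹ : K) = algebraMap R K π) :
    HasCuspidalReduction R ((⟨u, 0, 0, 0⟩ : VariableChange K) • W.map (algebraMap R K)) := by
  refine ⟨⟨π * W.a₁, π ^ 2 * W.a₂, π ^ 3 * W.a₃, π ^ 4 * W.a₄, π ^ 6 * W.a₆⟩, ?_, ?_⟩
  · simp [variableChange_def, WeierstrassCurve.map, hu]
  · simp [WeierstrassCurve.map, (IsLocalRing.residue_eq_zero_iff π).mpr hπ]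

variable {V : WeierstrassCurve K}

/-- `P` has integral coordinates `(z, w)` with `z` reducing to `c`. If `V` has cuspidal reduction
`w = z³`, this says that `P` reduces to the nonsingular point `(c, c³)`. -/
def ReducesTo (P : V.toAffine.Point) (c : IsLocalRing.ResidueField R) : Prop :=
  ∃ z w : R, HasZW P (algebraMap R K z) (algebraMap R K w) ∧ IsLocalRing.residue R z = c

lemma reducesTo_zero : ReducesTo R (0 : V.toAffine.Point) 0 :=
  ⟨0, 0, ⟨map_zero _, map_zero _⟩, map_zero _⟩

variable {R} {P Q : V.toAffine.Point} {c d : IsLocalRing.ResidueField R}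

lemma isUnit_of_residue_eq_one {r : R} (hr : IsLocalRing.residue R r = 1) : IsUnit r :=
  IsLocalRing.residue_ne_zero_iff_isUnit r |>.mp (hr ▸ one_ne_zero)

lemma ReducesTo.neg (hV : HasCuspidalReduction R V) (h : ReducesTo R P c) :
    ReducesTo R (-P) (-c) := by
  obtain ⟨W, rfl, hW⟩ := hV
  obtain ⟨z, w, hzw, rfl⟩ := h
  have ha₁ : IsLocalRing.residue R W.a₁ = 0 := congrArg a₁ hW
  have ha₃ : IsLocalRing.residue R W.a₃ = 0 := congrArg a₃ hW
  have hu_res : IsLocalRing.residue R (1 - W.a₁ * z - W.a₃ * w) = 1 := by simp [ha₁, ha₃]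
  have hu := isUnit_of_residue_eq_one hu_res
  obtain ⟨z', hz'⟩ := hu.dvd (a := -z)
  obtain ⟨w', hw'⟩ := hu.dvd (a := -w)
  refine ⟨z', w', hzw.neg ?_ ?_ ?_, ?_⟩
  · simpa using (hu.map (algebraMap R K)).ne_zero
  · simpa using congrArg (algebraMap R K) hz'.symm
  · simpa using congrArg (algebraMap R K) hw'.symm
  · simpa [hu_res] using congrArg (IsLocalRing.residue R) hz'.symm

lemma ReducesTo.neg_add [DecidableEq K] {x₁ x₂ y₁ y₂ : K}
    {h₁ : V.toAffine.Nonsingular x₁ y₁} {h₂ : V.toAffine.Nonsingular x₂ y₂}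
    (hV : HasCuspidalReduction R V)
    (hP : ReducesTo R (.some x₁ y₁ h₁) c) (hQ : ReducesTo R (.some x₂ y₂ h₂) d)
    (hPQ : ¬(x₁ = x₂ ∧ y₁ = V.toAffine.negY x₂ y₂)) :
    ReducesTo R (-(Affine.Point.some x₁ y₁ h₁ + Affine.Point.some x₂ y₂ h₂)) (-(c + d)) := by
  obtain ⟨W, rfl, hW⟩ := hV
  obtain ⟨z₁, w₁, hzw₁, rfl⟩ := hP
  obtain ⟨z₂, w₂, hzw₂, rfl⟩ := hQ
  have hD : IsUnit (chordDen W z₁ w₁ w₂) := isUnit_of_residue_eq_one <| by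
    rw [← map_chordDen, hW]; simp [chordDen]
  obtain ⟨ℓ, hℓ⟩ := hD.dvd (a := chordNum W z₁ z₂ w₂)
  have hA_res : IsLocalRing.residue R (lineCoeffCube W ℓ) = 1 := by
    rw [← map_lineCoeffCube, hW]; simp [lineCoeffCube]
  have hA := isUnit_of_residue_eq_one hA_res
  have hB_res : IsLocalRing.residue R (lineCoeffSq W ℓ (w₁ - ℓ * z₁)) = 0 := by
    rw [← map_lineCoeffSq, hW]; simp [lineCoeffSq]
  obtain ⟨t, ht⟩ := hA.dvd (a := -lineCoeffSq W ℓ (w₁ - ℓ * z₁))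
  refine ⟨t - z₁ - z₂, ℓ * (t - z₁ - z₂) + (w₁ - ℓ * z₁),
    hzw₁.neg_add (ℓ := algebraMap R K ℓ) hzw₂ hPQ ?_ ?_ ?_ ?_ (by simp), ?_⟩
  · rw [map_chordDen]
    exact (hD.map (algebraMap R K)).ne_zero
  · rw [map_chordDen, map_chordNum, hℓ, map_mul, mul_comm]
  · rw [map_lineCoeffCube]
    exact (hA.map (algebraMap R K)).ne_zero
  · simp only [← map_mul, ← map_sub, ← map_add, ← map_neg, map_lineCoeffCube, map_lineCoeffSq, ht]
    congr 2
    ring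
  · have ht_res : IsLocalRing.residue R t = 0 := by
      simpa [hA_res, hB_res] using (congrArg (IsLocalRing.residue R) ht).symm
    simp only [map_sub, ht_res]
    ring

variable [FaithfulSMul R K]

lemma ReducesTo.unique (h : ReducesTo R P c) (h' : ReducesTo R P d) : c = d := by
  obtain ⟨z, w, hzw, rfl⟩ := h
  obtain ⟨z', w', hzw', rfl⟩ := h'
  rw [FaithfulSMul.algebraMap_injective R K (hzw.z_unique hzw')]

variable [DecidableEq K]

lemma ReducesTo.add (hV : HasCuspidalReduction R V) (hP : ReducesTo R P c)
    (hQ : ReducesTo R Q d) : ReducesTo R (P + Q) (c + d) := by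
  match P, Q, hP, hQ with
  | 0, Q, hP, hQ => rwa [zero_add, hP.unique (reducesTo_zero R), zero_add]
  | P, 0, hP, hQ => rwa [add_zero, hQ.unique (reducesTo_zero R), add_zero]
  | .some x₁ y₁ h₁, .some x₂ y₂ h₂, hP, hQ =>
    by_cases hPQ : x₁ = x₂ ∧ y₁ = V.toAffine.negY x₂ y₂
    · obtain ⟨rfl, rfl⟩ := hPQ
      rw [hP.unique (hQ.neg hV), neg_add_cancel, Affine.Point.add_of_Y_eq rfl rfl]
      exact reducesTo_zero R
    · simpa only [neg_neg] using (hP.neg_add hV hQ hPQ).neg hV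

lemma ReducesTo.nsmul (hV : HasCuspidalReduction R V) (hP : ReducesTo R P c) (n : ℕ) :
    ReducesTo R (n • P) (n * c) := by
  induction n with
  | zero => simpa using reducesTo_zero R
  | succ n ih =>
    rw [succ_nsmul, Nat.cast_succ, add_one_mul]
    exact ih.add hV hP

lemma nsmul_ne_zero_of_reducesTo (hV : HasCuspidalReduction R V) (hP : ReducesTo R P c)
    (hc : c ≠ 0) {n : ℕ} (hn : IsUnit (n : R)) : n • P ≠ 0 := by
  intro htor
  have hnc : (n : IsLocalRing.ResidueField R) * c = 0 :=
    (hP.nsmul hV n).unique (htor ▸ reducesTo_zero R)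
  have hn_res : IsUnit (n : IsLocalRing.ResidueField R) := by
    simpa using hn.map (IsLocalRing.residue R)
  exact hc (hn_res.mul_right_eq_zero.mp hnc)

end CuspidalReduction

end WeierstrassInfinity

section ValuationRing

open IsLocalization (IsInteger)
open WeierstrassVariableChange WeierstrassInfinity

variable {R K : Type*} [CommRing R] [IsDomain R] [ValuationRing R] [Field K] [Algebra R K]
  [IsFractionRing R K]

lemma exists_mem_maximalIdeal_of_not_isInteger {x : K} (hx : ¬IsInteger R x) :
    ∃ ξ ∈ IsLocalRing.maximalIdeal R, algebraMap R K ξ = x⁻¹ := by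
  obtain ⟨ξ, hξ⟩ := (ValuationRing.isInteger_or_isInteger R x).resolve_left hx
  refine ⟨ξ, fun hunit => hx ?_, hξ⟩
  obtain ⟨r, hr⟩ := hunit.exists_right_inv
  refine ⟨r, ?_⟩
  rw [← inv_inv x, ← hξ]
  exact eq_inv_of_mul_eq_one_right (by rw [← map_mul, hr, map_one])

variable {W : WeierstrassCurve R} {x y : K}

lemma isInteger_Y_of_isInteger_X (h : (W.map (algebraMap R K)).toAffine.Equation x y)
    (hx : IsInteger R x) : IsInteger R y := by
  by_contra hy
  obtain ⟨x, rfl⟩ := hx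
  obtain ⟨η, -, hη⟩ := exists_mem_maximalIdeal_of_not_isInteger hy
  have hy0 : y ≠ 0 := by rintro rfl; exact hy ⟨0, map_zero _⟩
  refine hy ⟨(x ^ 3 + W.a₂ * x ^ 2 + W.a₄ * x + W.a₆) * η - W.a₁ * x - W.a₃, ?_⟩
  rw [Affine.equation_iff] at h
  simp only [map_a₁, map_a₂, map_a₃, map_a₄, map_a₆] at h
  simp only [map_sub, map_mul, map_add, map_pow, ← h, hη]
  field_simp
  ring

lemma not_isInteger_Y_div_X_of_not_isInteger
    (h : (W.map (algebraMap R K)).toAffine.Equation x y) (hx : ¬IsInteger R x) :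
    ¬IsInteger R (y / x) := by
  rintro ⟨η, hη⟩
  obtain ⟨ξ, -, hξ⟩ := exists_mem_maximalIdeal_of_not_isInteger hx
  have hx0 : x ≠ 0 := by rintro rfl; exact hx ⟨0, map_zero _⟩
  refine hx ⟨η ^ 2 + W.a₁ * η + W.a₃ * η * ξ - W.a₂ - W.a₄ * ξ - W.a₆ * ξ ^ 2, ?_⟩
  rw [Affine.equation_iff] at h
  simp only [map_a₁, map_a₂, map_a₃, map_a₄, map_a₆] at h
  simp only [map_sub, map_mul, map_add, map_pow, hη, hξ]
  field_simp
  linear_combination h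

/-- Here `π = -x/y` and `w = y²/x³`; dividing the Weierstrass equation by `x³` exhibits the latter
as a quotient of two elements of `1 + 𝔪`. -/
lemma exists_scaling_of_not_isInteger
    (h : (W.map (algebraMap R K)).toAffine.Equation x y) (hx : ¬IsInteger R x) :
    ∃ π ∈ IsLocalRing.maximalIdeal R, ∃ w : R,
      x * algebraMap R K (π ^ 2 * w) = 1 ∧ y * algebraMap R K (π ^ 3 * w) = -1 := by
  obtain ⟨ξ, -, hξ⟩ := exists_mem_maximalIdeal_of_not_isInteger hx
  obtain ⟨ρ, hρ_mem, hρ⟩ := exists_mem_maximalIdeal_of_not_isInteger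
    (not_isInteger_Y_div_X_of_not_isInteger h hx)
  have hx0 : x ≠ 0 := by rintro rfl; exact hx ⟨0, map_zero _⟩
  have hy0 : y ≠ 0 := by
    rintro rfl
    exact not_isInteger_Y_div_X_of_not_isInteger h hx ⟨0, by simp⟩
  have hunit : IsUnit (1 + W.a₁ * ρ + W.a₃ * ρ * ξ) := isUnit_of_residue_eq_one <| by
    simp [(IsLocalRing.residue_eq_zero_iff ρ).mpr hρ_mem]
  obtain ⟨w, hw⟩ := hunit.dvd (a := 1 + W.a₂ * ξ + W.a₄ * ξ ^ 2 + W.a₆ * ξ ^ 3)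
  have hwK : algebraMap R K w = y ^ 2 / x ^ 3 := by
    refine mul_left_cancel₀ (hunit.map (algebraMap R K)).ne_zero ?_
    rw [← map_mul, ← hw]
    rw [Affine.equation_iff] at h
    simp only [map_a₁, map_a₂, map_a₃, map_a₄, map_a₆] at h
    simp only [map_add, map_mul, map_pow, map_one, hξ, hρ]
    field_simp
    linear_combination -h
  refine ⟨-ρ, neg_mem hρ_mem, w, ?_, ?_⟩
  all_goals
    simp only [map_mul, map_pow, map_neg, hρ, hwK]
    field_simp

lemma exists_reducesTo_one_of_not_isInteger [DecidableEq K]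
    (h : (W.map (algebraMap R K)).toAffine.Nonsingular x y) (hx : ¬IsInteger R x) :
    ∃ C : VariableChange K, HasCuspidalReduction R (C • W.map (algebraMap R K)) ∧
      ∃ P : (C • W.map (algebraMap R K)).toAffine.Point,
        ReducesTo R P 1 ∧ pointHom P = .some x y h := by
  obtain ⟨π, hπ, w, hxw, hyw⟩ := exists_scaling_of_not_isInteger h.1 hx
  have hπ0 : algebraMap R K π ≠ 0 := fun hπ0 => by simp [hπ0] at hxw
  let C : VariableChange K := ⟨(Units.mk0 _ hπ0)⁻¹, 0, 0, 0⟩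
  have hX : mapX C (algebraMap R K (π ^ 2) * x) = x := by
    simp [mapX, C, hπ0]
  have hY : mapY C (algebraMap R K (π ^ 2) * x) (algebraMap R K (π ^ 3) * y) = y := by
    simp [mapY, C, hπ0]
  refine ⟨C, hasCuspidalReduction_smul hπ (by simp),
    .some _ _ ((nonsingular_smul_iff ..).mpr (by rwa [hX, hY])),
    ⟨1, w, ⟨?_, ?_⟩, map_one _⟩, ?_⟩
  · rw [map_one, ← hxw, map_mul]
    ring
  · rw [← hyw, map_mul]
    ring
  · simp only [pointHom, AddMonoidHom.coe_mk, ZeroHom.coe_mk, hX, hY]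

theorem statement17_general [DecidableEq K] (W : WeierstrassCurve R) {n : ℕ} (hn : IsUnit (n : R))
    (x y : K) (h : (W.map (algebraMap R K)).toAffine.Nonsingular x y)
    (htor : n • Affine.Point.some x y h = 0) : IsInteger R x ∧ IsInteger R y := by
  have hx : IsInteger R x := by
    by_contra hx
    obtain ⟨C, hC, P, hP, hP_map⟩ := exists_reducesTo_one_of_not_isInteger h hx
    have hP_tor : n • P = 0 := pointHom_injective C _ <| by
      rw [map_nsmul, hP_map, htor, map_zero]
    exact nsmul_ne_zero_of_reducesTo hC hP one_ne_zero hn hP_tor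
  exact ⟨hx, isInteger_Y_of_isInteger_X h.1 hx⟩

end ValuationRing

section AddValuation

variable {K Γ₀ : Type*} [Field K] [LinearOrderedAddCommGroupWithTop Γ₀] {v : AddValuation K Γ₀}

lemma isInteger_valuationSubring_iff {x : K} :
    IsLocalization.IsInteger (AddValuation.toValuation v).valuationSubring x ↔ 0 ≤ v x :=
  ⟨fun ⟨r, hr⟩ => hr ▸ r.2, fun hx => ⟨⟨x, hx⟩, rfl⟩⟩

lemma isUnit_natCast_valuationSubring {n : ℕ} (hn : v (n : K) = 0) :
    IsUnit (n : (AddValuation.toValuation v).valuationSubring) :=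
  (Valuation.integer.integers (AddValuation.toValuation v)).isUnit_iff_valuation_eq_one.mpr hn

lemma IsIntegralModel.exists_lift {v : AddValuation K (WithTop ℝ)} {W : WeierstrassCurve K}
    (hW : IsIntegralModel v W) :
    ∃ W₀ : WeierstrassCurve (AddValuation.toValuation v).valuationSubring,
      W = W₀.map (algebraMap _ K) :=
  let ⟨h₁, h₂, h₃, h₄, h₆⟩ := hW
  ⟨⟨⟨_, h₁⟩, ⟨_, h₂⟩, ⟨_, h₃⟩, ⟨_, h₄⟩, ⟨_, h₆⟩⟩, rfl⟩

end AddValuation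

open scoped Classical in
/-- Let `K` be an algebraically closed field with a nontrivial
non-archimedean valuation `v`, let `E` be an elliptic curve over `K` given by an integral
Weierstrass model, and let `n` be a positive integer not divisible by the residue
characteristic (encoded by `v n = 0`).  If `P = (x, y)` is an affine point of `E(K)` with
`n • P = 0`, then `v x ≥ 0` and `v y ≥ 0`; equivalently, the kernel `E₁(K)` of the
reduction map contains no nontrivial `n`-torsion. -/
theorem statement17 {K : Type*} [Field K] [IsAlgClosed K] (v : AddValuation K (WithTop ℝ))
    (hv : ∃ x : K, x ≠ 0 ∧ v x ≠ 0)
    (W : WeierstrassCurve K) (hΔ : W.Δ ≠ 0) (hint : IsIntegralModel v W)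
    (n : ℕ) (hn : 0 < n) (hvn : v (n : K) = 0)
    (x y : K) (h : W.toAffine.Nonsingular x y)
    (htor : n • (Affine.Point.some x y h) = 0) :
    0 ≤ v x ∧ 0 ≤ v y := by
  obtain ⟨W₀, rfl⟩ := hint.exists_lift
  simpa only [isInteger_valuationSubring_iff] using
    statement17_general W₀ (isUnit_natCast_valuationSubring hvn) x y h htor
end
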